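/- arXiv:1811.11411 — 2 statements merged into one kernel-verified Lean document; each statement's English description precedes it below -/
import Mathlib

section
/- Among all unicyclic graphs on n ≥ 4 vertices, the pineapple graph U^p_{n,3} (a triangle with n − 3 pendant vertices at one vertex) uniquely maximizes the core index, with F(U^p_{n,3}) = 7·2^{n−3} + n. -/
open SimpleGraph

/-- The core index of a graph `G`: the number of connected subgraphs of `G`. -/
noncomputable def coreIndex {V : Type*} (G : SimpleGraph V) : ℕ :=
  Nat.card {H : G.Subgraph // H.Connected}

/-- The pineapple graph `U^p_{n,g}`: the cycle `C_g` together with `n - g` pendant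
vertices all attached to the cycle vertex `0`. -/
def pineapple (n g : ℕ) : SimpleGraph (Fin g ⊕ Fin (n - g)) :=
  SimpleGraph.fromRel (fun x y =>
    (∃ a b : Fin g, x = Sum.inl a ∧ y = Sum.inl b ∧ (cycleGraph g).Adj a b) ∨
    (∃ (a : Fin g) (i : Fin (n - g)), x = Sum.inl a ∧ (a : ℕ) = 0 ∧ y = Sum.inr i))

namespace CoreIdx
open Finset
open scoped Classical

/-- `S` splits into two vertex-separated nonempty parts. -/
def Split {V : Type*} (S : Finset (Sym2 V)) : Prop :=
  ∃ X : Set V, (∃ e ∈ S, ∀ x ∈ e, x ∈ X) ∧ (∃ e ∈ S, ∀ x ∈ e, x ∉ X) ∧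
    ∀ e ∈ S, (∀ x ∈ e, x ∈ X) ∨ (∀ x ∈ e, x ∉ X)

def Bad {V : Type*} (S : Finset (Sym2 V)) : Prop := S = ∅ ∨ Split S

noncomputable def bads {V : Type*} (E : Finset (Sym2 V)) : Finset (Finset (Sym2 V)) :=
  E.powerset.filter Bad

/-- degree -/
noncomputable def dg {V : Type*} (E : Finset (Sym2 V)) (v : V) : ℕ := (E.filter (v ∈ ·)).card

/-- covered vertices -/
noncomputable def cov {V : Type*} [Fintype V] (E : Finset (Sym2 V)) : Finset V :=
  univ.filter (fun v => ∃ e ∈ E, v ∈ e)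

def sub {V : Type*} (G : SimpleGraph V) (S : Finset (Sym2 V)) (h : ∀ e ∈ S, e ∈ G.edgeSet) :
    G.Subgraph where
  verts := {x | ∃ e ∈ S, x ∈ e}
  Adj a b := s(a, b) ∈ S
  adj_sub := fun hab => h _ hab
  edge_vert := fun hab => ⟨_, hab, Sym2.mem_mk_left _ _⟩
  symm := ⟨fun a b hab => by rwa [Sym2.eq_swap]⟩

lemma sub_conn {V : Type*} (G : SimpleGraph V) (S : Finset (Sym2 V))
    (h : ∀ e ∈ S, e ∈ G.edgeSet) : (sub G S h).Connected ↔ ¬ Bad S := by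
  constructor
  · rintro hc (rfl | ⟨X, ⟨e, he, heX⟩, ⟨f, hf, hfX⟩, hX⟩)
    · obtain ⟨x, e, he, _⟩ := hc.nonempty
      simp at he
    · induction e using Sym2.ind with | _ a b
      induction f using Sym2.ind with | _ c d
      obtain ⟨p⟩ := hc.coe.preconnected ⟨a, _, he, Sym2.mem_mk_left _ _⟩
        ⟨c, _, hf, Sym2.mem_mk_left _ _⟩
      have key : ∀ {u v : (sub G S h).verts} (p : (sub G S h).coe.Walk u v), (u : V) ∈ X → (v : V) ∈ X := by
        intro u v p
        induction p with
        | nil => exact id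
        | cons hadj _ ih =>
          intro hu
          apply ih
          rcases hX _ hadj with h1 | h1
          · exact h1 _ (Sym2.mem_mk_right _ _)
          · exact absurd hu (h1 _ (Sym2.mem_mk_left _ _))
      exact hfX c (Sym2.mem_mk_left _ _) (key p (heX a (Sym2.mem_mk_left _ _)))
  · intro hb
    rw [Bad, not_or] at hb
    obtain ⟨hne, hs⟩ := hb
    rw [Subgraph.connected_iff']
    have hn : Nonempty (sub G S h).verts := by
      obtain ⟨e, he⟩ := Finset.nonempty_iff_ne_empty.2 hne
      induction e using Sym2.ind with | _ a b
      exact ⟨⟨a, _, he, Sym2.mem_mk_left _ _⟩⟩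
    refine { preconnected := ?_, nonempty := hn }
    intro u v
    by_contra hr
    apply hs
    let X : Set V := {x | ∃ hx : x ∈ (sub G S h).verts, (sub G S h).coe.Reachable u ⟨x, hx⟩}
    have step : ∀ a b, s(a, b) ∈ S → a ∈ X → b ∈ X := by
      rintro a b hab ⟨ha, hra⟩
      refine ⟨⟨_, hab, Sym2.mem_mk_right _ _⟩, hra.trans (Adj.reachable ?_)⟩
      exact hab
    have hX : ∀ e ∈ S, (∀ x ∈ e, x ∈ X) ∨ (∀ x ∈ e, x ∉ X) := by
      intro e he
      induction e using Sym2.ind with | _ a b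
      have h1 := step a b he
      have h2 := step b a (by rwa [Sym2.eq_swap])
      simp only [Sym2.mem_iff, forall_eq_or_imp, forall_eq]
      tauto
    refine ⟨X, ?_, ?_, hX⟩
    · obtain ⟨u, e, he, hu⟩ := u
      refine ⟨e, he, (hX e he).resolve_right fun hh => hh u hu ⟨⟨e, he, hu⟩, Reachable.refl _⟩⟩
    · obtain ⟨v, e, he, hv⟩ := v
      refine ⟨e, he, (hX e he).resolve_left fun hh => hr (hh v hv).2⟩

lemma coreIndex_eq {V : Type*} [Fintype V] (G : SimpleGraph V) :
    coreIndex G + (bads G.edgeFinset).card = Fintype.card V + 2 ^ G.edgeFinset.card := by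
  have hE : ∀ S ∈ G.edgeFinset.powerset, ∀ e ∈ S, e ∈ G.edgeSet := by
    intro S hS e he
    exact mem_edgeFinset.1 (Finset.mem_powerset.1 hS he)
  let good := G.edgeFinset.powerset.filter (fun S => ¬ Bad S)
  let f : V ⊕ good → {H : G.Subgraph // H.Connected} := fun x => match x with
    | .inl v => ⟨G.singletonSubgraph v, Subgraph.singletonSubgraph_connected⟩
    | .inr S => ⟨sub G S.1 (hE _ (mem_filter.1 S.2).1), (sub_conn _ _ _).2 (mem_filter.1 S.2).2⟩
  have hne : ∀ S : good, ∃ a b, s(a, b) ∈ S.1 := by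
    intro S
    obtain ⟨e, he⟩ := Finset.nonempty_iff_ne_empty.2 (fun h0 => (mem_filter.1 S.2).2 (Or.inl h0))
    induction e using Sym2.ind with | _ a b
    exact ⟨a, b, he⟩
  have hf : Function.Bijective f := by
    constructor
    · rintro (v | S) (w | T) hvw
      · have := congrArg (fun H => Subgraph.verts H.1) hvw
        simpa [f] using this
      · obtain ⟨a, b, hab⟩ := hne T
        have := congrArg (fun H => Subgraph.Adj H.1 a b) hvw
        simp [f, sub, hab] at this
      · obtain ⟨a, b, hab⟩ := hne S
        have := congrArg (fun H => Subgraph.Adj H.1 a b) hvw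
        simp [f, sub, hab] at this
      · congr 1
        ext e
        induction e using Sym2.ind with | _ a b
        have := congrArg (fun H => Subgraph.Adj H.1 a b) hvw
        simpa [f, sub] using this
    · rintro ⟨H, hH⟩
      by_cases h0 : ∃ a b, H.Adj a b
      · have key : ∀ h, sub G H.edgeSet.toFinset h = H := by
          intro h
          ext x y
          · simp only [sub, Set.mem_ofPred_eq, Set.mem_toFinset]
            constructor
            · rintro ⟨e, he, hx⟩
              exact Subgraph.mem_verts_of_mem_edge he hx
            · intro hx
              have : ∃ y ∈ H.verts, y ≠ x := by
                obtain ⟨a, b, hab⟩ := h0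
                by_cases hax : a = x
                · exact ⟨b, H.edge_vert hab.symm, fun hb => G.loopless.irrefl x (by
                    have := hab.adj_sub; rwa [hax, hb] at this)⟩
                · exact ⟨a, H.edge_vert hab, hax⟩
              obtain ⟨y, hy, hyx⟩ := this
              obtain ⟨p⟩ := hH.coe.preconnected ⟨x, hx⟩ ⟨y, hy⟩
              cases p with
              | nil => exact absurd rfl hyx
              | cons hadj _ => exact ⟨s(x, _), hadj, Sym2.mem_mk_left _ _⟩
          · simp [sub]
        have hsub : ∀ e ∈ H.edgeSet.toFinset, e ∈ G.edgeSet := by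
          intro e he
          exact H.edgeSet_subset (Set.mem_toFinset.1 he)
        have hg : H.edgeSet.toFinset ∈ good := by
          simp only [good, mem_filter, Finset.mem_powerset]
          refine ⟨fun e he => mem_edgeFinset.2 (hsub e he), ?_⟩
          rw [← sub_conn G _ hsub, key]
          exact hH
        exact ⟨Sum.inr ⟨_, hg⟩, Subtype.ext (key hsub)⟩
      · obtain ⟨v, hv⟩ := hH.nonempty
        refine ⟨Sum.inl v, Subtype.ext ?_⟩
        push Not at h0
        have hall : ∀ x ∈ H.verts, x = v := by
          intro x hx
          obtain ⟨p⟩ := hH.coe.preconnected ⟨x, hx⟩ ⟨v, hv⟩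
          cases p with
          | nil => rfl
          | cons hadj _ => exact absurd hadj (h0 _ _)
        ext x y
        · simp only [f, singletonSubgraph_verts, Set.mem_singleton_iff]
          exact ⟨fun h => h ▸ hv, hall x⟩
        · simp [f, h0]
  have h1 : coreIndex G = Fintype.card V + good.card := by
    rw [coreIndex, ← Nat.card_eq_of_bijective f hf, Nat.card_eq_fintype_card, Fintype.card_sum,
      Fintype.card_coe]
  have h2 := Finset.card_filter_add_card_filter_not (s := G.edgeFinset.powerset) Bad
  rw [Finset.card_powerset] at h2
  rw [h1, bads]
  simp only [good]
  omega

lemma singleton_not_bad {V : Type*} (e : Sym2 V) : ¬ Bad {e} := by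
  rintro (h | ⟨X, ⟨a, ha, haX⟩, ⟨b, hb, hbX⟩, -⟩)
  · simp at h
  · rw [Finset.mem_singleton] at ha hb
    subst ha
    subst hb
    induction b using Sym2.ind with | _ a b
    exact hbX a (Sym2.mem_mk_left _ _) (haX a (Sym2.mem_mk_left _ _))

/-- an edge disjoint from the remaining edges gives a split -/
lemma split_of_disj {V : Type*} (S : Finset (Sym2 V)) (c : Sym2 V) (hc : c ∈ S) (hne : S ≠ {c})
    (hd : ∀ e ∈ S, e ≠ c → ∀ x ∈ e, x ∉ c) : Split S := by
  have : ∃ d ∈ S, d ≠ c := by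
    by_contra h
    push Not at h
    exact hne (Finset.eq_singleton_iff_unique_mem.2 ⟨hc, h⟩)
  obtain ⟨d, hdS, hdc⟩ := this
  refine ⟨{x | x ∈ c}, ⟨c, hc, fun x hx => hx⟩, ⟨d, hdS, hd d hdS hdc⟩, fun e he => ?_⟩
  by_cases hec : e = c
  · left; subst hec; exact fun x hx => hx
  · right; exact hd e he hec

/-- adding / removing a leaf edge preserves splits. -/
lemma split_insert {V : Type*} (T : Finset (Sym2 V)) (v w : V) (hvw : v ≠ w)
    (hv : ∀ e ∈ T, v ∉ e) (hT : Split T) : Split (insert s(v, w) T) := by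
  obtain ⟨X, ⟨a, ha, haX⟩, ⟨b, hb, hbX⟩, hX⟩ := hT
  let Y : Set V := {x | (x ≠ v ∧ x ∈ X) ∨ (x = v ∧ w ∈ X)}
  have hY : ∀ e ∈ T, ∀ x ∈ e, (x ∈ Y ↔ x ∈ X) := by
    intro e he x hx
    have : x ≠ v := by rintro rfl; exact hv e he hx
    simp [Y, this]
  refine ⟨Y, ⟨a, mem_insert_of_mem ha, fun x hx => (hY a ha x hx).2 (haX x hx)⟩,
    ⟨b, mem_insert_of_mem hb, fun x hx => fun h => hbX x hx ((hY b hb x hx).1 h)⟩, ?_⟩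
  intro e he
  rcases mem_insert.1 he with rfl | he
  · have h1 : v ∈ Y ↔ w ∈ X := by simp [Y]
    have h2 : w ∈ Y ↔ w ∈ X := by simp [Y, hvw.symm]
    simp only [Sym2.mem_iff, forall_eq_or_imp, forall_eq, h1, h2]
    tauto
  · rcases hX e he with h | h
    · left; exact fun x hx => (hY e he x hx).2 (h x hx)
    · right; exact fun x hx => fun h' => h x hx ((hY e he x hx).1 h')

lemma sum_dg {V : Type*} [Fintype V] (E : Finset (Sym2 V)) (hd : ∀ e ∈ E, ¬ e.IsDiag) :
    ∑ v ∈ cov E, dg E v = 2 * E.card := by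
  have h1 : ∑ v ∈ cov E, dg E v = ∑ v : V, dg E v := by
    apply Finset.sum_subset (Finset.subset_univ _)
    intro v _ hv
    simp only [cov, mem_filter, mem_univ, true_and, not_exists, not_and] at hv
    simp only [dg, Finset.card_eq_zero, Finset.filter_eq_empty_iff]
    exact fun e he => hv e he
  rw [h1]
  simp only [dg, Finset.card_filter]
  rw [Finset.sum_comm]
  have : ∀ e ∈ E, ∑ v : V, (if v ∈ e then 1 else 0) = 2 := by
    intro e he
    rw [← Finset.card_filter, ← Sym2.card_toFinset_of_not_isDiag e (hd e he)]
    congr 1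
    ext v
    simp
  rw [Finset.sum_congr rfl this]
  simp [mul_comm]

/-- the number of edges meeting `w` is less than the number of covered vertices -/
lemma dg_lt {V : Type*} [Fintype V] (E : Finset (Sym2 V)) (hd : ∀ e ∈ E, ¬ e.IsDiag) (w : V)
    (hw : w ∈ cov E) : dg E w + 1 ≤ (cov E).card := by
  rw [← Finset.card_erase_add_one hw]
  have : dg E w ≤ ((cov E).erase w).card := by
    calc dg E w ≤ (((cov E).erase w).image (fun x => s(w, x))).card := by
          apply Finset.card_le_card
          intro e he
          obtain ⟨heE, hwe⟩ := mem_filter.1 he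
          obtain ⟨y, rfl⟩ := hwe
          refine mem_image.2 ⟨y, mem_erase.2 ⟨?_, ?_⟩, rfl⟩
          · rintro rfl
            exact hd _ heE (by simp)
          · simp only [cov, mem_filter, mem_univ, true_and]
            exact ⟨_, heE, Sym2.mem_mk_right _ _⟩
      _ ≤ _ := Finset.card_image_le
  omega


lemma empty_mem_bads {V : Type*} (F : Finset (Sym2 V)) : ∅ ∈ bads F := by
  simp [bads, Bad]

lemma leaf_step {V : Type*} (F : Finset (Sym2 V)) (v w : V) (hvw : v ≠ w)
    (hv : ∀ e ∈ F, v ∉ e) :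
    2 * (bads F).card + (F.filter (fun d => w ∉ d)).card ≤
      (bads (insert s(v, w) F)).card + 1 := by
  set l := s(v, w) with hl
  have hlF : l ∉ F := fun h => hv l h (Sym2.mem_mk_left _ _)
  let D := F.filter (fun d => w ∉ d)
  let A := (bads F).erase ∅ ∪ D.image (fun d => ({d} : Finset (Sym2 V)))
  have hdisj : Disjoint ((bads F).erase ∅) (D.image (fun d => ({d} : Finset (Sym2 V)))) := by
    rw [Finset.disjoint_left]
    intro T hT hT'
    obtain ⟨d, -, rfl⟩ := mem_image.1 hT'
    exact singleton_not_bad d (mem_filter.1 (mem_of_mem_erase hT)).2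
  have hA : A.card + 1 = (bads F).card + D.card := by
    rw [Finset.card_union_of_disjoint hdisj,
      Finset.card_image_of_injective _ Finset.singleton_injective]
    have := Finset.card_erase_add_one (empty_mem_bads F)
    omega
  have hAF : ∀ T ∈ A, T ⊆ F := by
    intro T hT
    rcases mem_union.1 hT with h | h
    · exact Finset.mem_powerset.1 (mem_filter.1 (mem_of_mem_erase h)).1
    · obtain ⟨d, hd, rfl⟩ := mem_image.1 h
      exact Finset.singleton_subset_iff.2 (mem_filter.1 hd).1
  have hinj : Set.InjOn (fun T => insert l T) (A : Set (Finset (Sym2 V))) := by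
    intro S hS T hT hST
    have h1 : l ∉ S := fun h => hlF (hAF S hS h)
    have h2 : l ∉ T := fun h => hlF (hAF T hT h)
    have := congrArg (fun U => U.erase l) hST
    simpa [h1, h2] using this
  have hdisj2 : Disjoint (bads F) (A.image (fun T => insert l T)) := by
    rw [Finset.disjoint_left]
    intro S hS hS'
    obtain ⟨T, -, rfl⟩ := mem_image.1 hS'
    exact hlF (Finset.mem_powerset.1 (mem_filter.1 hS).1 (mem_insert_self _ _))
  have hsub : bads F ∪ A.image (fun T => insert l T) ⊆ bads (insert l F) := by
    intro S hS
    rcases mem_union.1 hS with h | h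
    · obtain ⟨h1, h2⟩ := mem_filter.1 h
      exact mem_filter.2 ⟨Finset.mem_powerset.2
        ((Finset.mem_powerset.1 h1).trans (Finset.subset_insert _ _)), h2⟩
    · obtain ⟨T, hT, rfl⟩ := mem_image.1 h
      refine mem_filter.2 ⟨Finset.mem_powerset.2 (Finset.insert_subset_insert _ (hAF T hT)), ?_⟩
      right
      rcases mem_union.1 hT with h | h
      · obtain ⟨h0, hb⟩ := mem_erase.1 h
        exact split_insert T v w hvw (fun e he => hv e (hAF T hT he))
          ((mem_filter.1 hb).2.resolve_left h0)
      · obtain ⟨d, hd, rfl⟩ := mem_image.1 h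
        obtain ⟨hdF, hwd⟩ := mem_filter.1 hd
        have hld : d ≠ l := by rintro rfl; exact hlF hdF
        apply split_of_disj _ l (mem_insert_self _ _)
        · intro h
          have : d ∈ ({l} : Finset (Sym2 V)) := h ▸ (by simp)
          exact hld (Finset.mem_singleton.1 this)
        · intro e he hel x hx hxl
          have hed : e = d := by
            rcases mem_insert.1 he with h | h
            · exact absurd h hel
            · exact Finset.mem_singleton.1 h
          subst hed
          rcases Sym2.mem_iff.1 hxl with rfl | rfl
          · exact hv e hdF hx
          · exact hwd hx
  have := Finset.card_le_card hsub
  rw [Finset.card_union_of_disjoint hdisj2, Finset.card_image_of_injOn hinj] at this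
  change 2 * (bads F).card + D.card ≤ _
  omega

/-- the edges meeting a given edge -/
lemma meet_card {V : Type*} (E : Finset (Sym2 V)) (x y : V) (hc : s(x, y) ∈ E)
    (hx : dg E x = 2) (hy : dg E y = 2) :
    (E.filter (fun e => ∃ z ∈ e, z ∈ s(x, y))).card ≤ 3 := by
  have h : E.filter (fun e => ∃ z ∈ e, z ∈ s(x, y)) = E.filter (x ∈ ·) ∪ E.filter (y ∈ ·) := by
    ext e
    simp only [mem_filter, mem_union, Sym2.mem_iff]
    constructor
    · rintro ⟨he, z, hz, rfl | rfl⟩ <;> tauto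
    · rintro (⟨he, h⟩ | ⟨he, h⟩)
      · exact ⟨he, x, h, Or.inl rfl⟩
      · exact ⟨he, y, h, Or.inr rfl⟩
  have h1 := Finset.card_union_add_card_inter (E.filter (x ∈ ·)) (E.filter (y ∈ ·))
  have h2 : 0 < (E.filter (x ∈ ·) ∩ E.filter (y ∈ ·)).card := by
    apply Finset.card_pos.2
    exact ⟨s(x, y), by simp [hc]⟩
  unfold dg at hx hy
  rw [h]
  omega

lemma regular_case {V : Type*} [Fintype V] (E : Finset (Sym2 V)) (hd : ∀ e ∈ E, ¬ e.IsDiag)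
    (hn : 4 ≤ E.card) (hreg : ∀ v ∈ cov E, dg E v = 2) : 2 ^ E.card < 8 * (bads E).card := by
  have hmeet : ∀ c ∈ E, (E.filter (fun e => ∃ z ∈ e, z ∈ c)).card ≤ 3 := by
    intro c hc
    induction c using Sym2.ind with | _ x y
    convert meet_card E x y hc (hreg x (by simp only [cov, mem_filter, mem_univ, true_and]; exact ⟨_, hc, Sym2.mem_mk_left _ _⟩))
      (hreg y (by simp only [cov, mem_filter, mem_univ, true_and]; exact ⟨_, hc, Sym2.mem_mk_right _ _⟩))
  obtain ⟨c, hc⟩ : E.Nonempty := Finset.card_pos.1 (by omega)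
  -- another edge meeting c
  obtain ⟨a, ha, hac, x, hxa, hxc⟩ : ∃ a ∈ E, a ≠ c ∧ ∃ x, x ∈ a ∧ x ∈ c := by
    induction c using Sym2.ind with | _ x y
    have := hreg x (by simp only [cov, mem_filter, mem_univ, true_and]; exact ⟨_, hc, Sym2.mem_mk_left _ _⟩)
    unfold dg at this
    obtain ⟨a, ha, hne⟩ := Finset.exists_mem_ne (by omega : 1 < (E.filter (x ∈ ·)).card) s(x, y)
    obtain ⟨h1, h2⟩ := mem_filter.1 ha
    exact ⟨a, h1, hne, x, h2, Sym2.mem_mk_left _ _⟩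
  have hself : ∀ c : Sym2 V, ∃ z ∈ c, z ∈ c := by
    intro c
    induction c using Sym2.ind with | _ x y
    exact ⟨x, Sym2.mem_mk_left _ _, Sym2.mem_mk_left _ _⟩
  obtain ⟨d, hdE, hda⟩ : ∃ d ∈ E, ¬ ∃ z ∈ d, z ∈ a := by
    by_contra h
    push Not at h
    have h3 := hmeet a ha
    rw [Finset.filter_true_of_mem h] at h3
    omega
  have hdc : d ≠ c := by rintro rfl; exact hda ⟨x, hxc, hxa⟩
  have hda' : d ≠ a := by rintro rfl; exact hda (hself d)
  let N := E.filter (fun e => ¬ ∃ z ∈ e, z ∈ c)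
  have hN : E.card ≤ N.card + 3 := by
    have h1 := Finset.card_filter_add_card_filter_not (s := E) (fun e => ∃ z ∈ e, z ∈ c)
    have h2 := hmeet c hc
    simp only [N]
    omega
  have hcN : c ∉ N := by
    intro h
    exact (mem_filter.1 h).2 (hself c)
  let φ : Finset (Sym2 V) → Finset (Sym2 V) := fun T => if T = ∅ then ∅ else insert c T
  have hφ : Set.InjOn φ (N.powerset : Set (Finset (Sym2 V))) := by
    intro S hS T hT hST
    have hS' : c ∉ S := fun h => hcN (Finset.mem_powerset.1 hS h)
    have hT' : c ∉ T := fun h => hcN (Finset.mem_powerset.1 hT h)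
    simp only [φ] at hST
    split_ifs at hST with h1 h2 h2
    · rw [h1, h2]
    · exact absurd hST.symm (Finset.insert_ne_empty _ _)
    · exact absurd hST (Finset.insert_ne_empty _ _)
    · have := congrArg (fun U => U.erase c) hST
      simpa [hS', hT'] using this
  have hnew : ({a, d} : Finset (Sym2 V)) ∉ N.powerset.image φ := by
    intro h
    obtain ⟨T, hT, h⟩ := mem_image.1 h
    simp only [φ] at h
    split_ifs at h with h1
    · exact (Finset.insert_ne_empty _ _) h.symm
    · have : c ∈ ({a, d} : Finset (Sym2 V)) := h ▸ mem_insert_self _ _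
      simp only [mem_insert, Finset.mem_singleton] at this
      rcases this with h | h
      · exact hac h.symm
      · exact hdc h.symm
  have hsub : insert {a, d} (N.powerset.image φ) ⊆ bads E := by
    intro S hS
    rcases mem_insert.1 hS with rfl | hS
    · refine mem_filter.2 ⟨Finset.mem_powerset.2 ?_, Or.inr ?_⟩
      · intro e he
        simp only [mem_insert, Finset.mem_singleton] at he
        rcases he with rfl | rfl <;> assumption
      · apply split_of_disj _ a (by simp)
        · intro h
          have : d ∈ ({a} : Finset (Sym2 V)) := h ▸ (by simp)
          exact hda' (Finset.mem_singleton.1 this)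
        · intro e he hea z hz hza
          simp only [mem_insert, Finset.mem_singleton] at he
          rcases he with rfl | rfl
          · exact hea rfl
          · exact hda ⟨z, hz, hza⟩
    · obtain ⟨T, hT, rfl⟩ := mem_image.1 hS
      rw [Finset.mem_powerset] at hT
      simp only [φ]
      split_ifs with h1
      · exact empty_mem_bads E
      · refine mem_filter.2 ⟨Finset.mem_powerset.2 ?_, Or.inr ?_⟩
        · exact Finset.insert_subset hc (hT.trans (Finset.filter_subset _ _))
        · apply split_of_disj _ c (mem_insert_self _ _)
          · intro h
            obtain ⟨t, ht⟩ := Finset.nonempty_iff_ne_empty.2 h1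
            have : t ∈ ({c} : Finset (Sym2 V)) := h ▸ mem_insert_of_mem ht
            rw [Finset.mem_singleton] at this
            subst this
            exact hcN (hT ht)
          · intro e he hec z hz hzc
            rcases mem_insert.1 he with h | h
            · exact hec h
            · exact (mem_filter.1 (hT h)).2 ⟨z, hz, hzc⟩
  have h1 := Finset.card_le_card hsub
  rw [Finset.card_insert_of_notMem hnew, Finset.card_image_of_injOn hφ,
    Finset.card_powerset] at h1
  have h2 : 2 ^ E.card ≤ 2 ^ (N.card + 3) := Nat.pow_le_pow_right (by norm_num) hN
  rw [pow_add] at h2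
  omega

theorem main {V : Type*} [Fintype V] (n : ℕ) : ∀ (E : Finset (Sym2 V)),
    (∀ e ∈ E, ¬ e.IsDiag) → ¬ Bad E → (cov E).card = n → E.card = n →
    2 ^ n ≤ 8 * (bads E).card ∧
      (4 ≤ n → 2 ^ n = 8 * (bads E).card → ∃ w, dg E w + 1 = n) := by
  induction n with
  | zero =>
    intro E _ _ _ _
    have := Finset.card_pos.2 ⟨_, empty_mem_bads E⟩
    exact ⟨by omega, by omega⟩
  | succ n ih =>
    intro E hd hb hcov hcard
    by_cases hn : n + 1 < 4
    · have := Finset.card_pos.2 ⟨_, empty_mem_bads E⟩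
      have h2 : 2 ^ (n + 1) ≤ 2 ^ 3 := Nat.pow_le_pow_right (by norm_num) (by omega)
      exact ⟨by omega, by omega⟩
    have hpos : ∀ v ∈ cov E, 0 < dg E v := by
      intro v hv
      simp only [cov, mem_filter, mem_univ, true_and] at hv
      obtain ⟨e, he, hve⟩ := hv
      exact Finset.card_pos.2 ⟨e, mem_filter.2 ⟨he, hve⟩⟩
    by_cases hleaf : ∃ v ∈ cov E, dg E v = 1
    · obtain ⟨v, hvc, hv⟩ := hleaf
      obtain ⟨l, hl⟩ := Finset.card_eq_one.1 hv
      have hlE : l ∈ E ∧ v ∈ l := mem_filter.1 (hl ▸ Finset.mem_singleton_self l)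
      obtain ⟨hlE, w, rfl⟩ := hlE
      have hvw : v ≠ w := by rintro rfl; exact hd _ hlE (by simp)
      set F := E.erase s(v, w) with hF
      have hvF : ∀ e ∈ F, v ∉ e := by
        intro e he hve
        have : e ∈ E.filter (v ∈ ·) := mem_filter.2 ⟨mem_of_mem_erase he, hve⟩
        rw [hl, Finset.mem_singleton] at this
        exact (mem_erase.1 he).1 this
      have hins : insert s(v, w) F = E := Finset.insert_erase hlE
      have hFcard : F.card = n := by
        rw [hF, Finset.card_erase_of_mem hlE, hcard]; rfl
      have hFd : ∀ e ∈ F, ¬ e.IsDiag := fun e he => hd e (mem_of_mem_erase he)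
      have hFne : F ≠ ∅ := by
        rintro h
        rw [h] at hFcard
        simp at hFcard
        omega
      have hFb : ¬ Bad F := by
        rintro (h | h)
        · exact hFne h
        · exact hb (Or.inr (hins ▸ split_insert F v w hvw hvF h))
      have hwF : ∃ e ∈ F, w ∈ e := by
        by_contra h
        push Not at h
        apply hb
        right
        apply split_of_disj E _ hlE
        · intro h'
          rw [h'] at hcard
          simp at hcard
          omega
        · intro e he hel x hx hxl
          have heF : e ∈ F := mem_erase.2 ⟨hel, he⟩
          rcases Sym2.mem_iff.1 hxl with rfl | rfl
          · exact hvF e heF hx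
          · exact h e heF hx
      have hcovF : cov F = (cov E).erase v := by
        ext x
        simp only [cov, mem_filter, mem_univ, true_and, mem_erase]
        constructor
        · rintro ⟨e, he, hx⟩
          exact ⟨by rintro rfl; exact hvF e he hx, e, mem_of_mem_erase he, hx⟩
        · rintro ⟨hxv, e, he, hx⟩
          by_cases hel : e = s(v, w)
          · subst hel
            rcases Sym2.mem_iff.1 hx with rfl | rfl
            · exact absurd rfl hxv
            · exact hwF
          · exact ⟨e, mem_erase.2 ⟨hel, he⟩, hx⟩
      have hcF : (cov F).card = n := by
        rw [hcovF, Finset.card_erase_of_mem hvc, hcov]; rfl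
      have hI := (ih F hFd hFb hcF hFcard).1
      have hw' : w ∈ cov F := by
        simp only [cov, mem_filter, mem_univ, true_and]; exact hwF
      have hlt := dg_lt F hFd w hw'
      have hstep := leaf_step F v w hvw hvF
      rw [hins] at hstep
      have hsum := Finset.card_filter_add_card_filter_not (s := F) (fun d => w ∈ d)
      have hdgE : dg E w = dg F w + 1 := by
        rw [← hins]
        unfold dg
        rw [Finset.filter_insert, if_pos (Sym2.mem_mk_right _ _), Finset.card_insert_of_notMem]
        intro h
        exact hvF _ (mem_filter.1 h).1 (Sym2.mem_mk_left _ _)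
      have hdgF : dg F w = (F.filter (fun d => w ∈ d)).card := rfl
      rw [pow_succ]
      refine ⟨by omega, fun _ heq => ⟨w, by omega⟩⟩
    · push Not at hleaf
      have hge : ∀ v ∈ cov E, 2 ≤ dg E v := by
        intro v hv
        have := hpos v hv
        have := hleaf v hv
        omega
      have hsum := sum_dg E hd
      have hreg : ∀ v ∈ cov E, dg E v = 2 := by
        have h := (Finset.sum_eq_sum_iff_of_le hge).1 (by
          rw [hsum, Finset.sum_const, hcov, hcard]; simp [mul_comm])
        exact fun v hv => (h v hv).symm
      have := regular_case E hd (by omega) hreg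
      rw [hcard] at this
      exact ⟨this.le, fun _ h => absurd h this.ne⟩

/-- A star centred at `w` together with one extra edge `xy`. -/
def StarEdge {V : Type*} (G : SimpleGraph V) (w x y : V) : Prop :=
  x ≠ w ∧ y ≠ w ∧ x ≠ y ∧ ∀ a b, G.Adj a b ↔ a ≠ b ∧ (a = w ∨ b = w ∨ s(a, b) = s(x, y))

lemma edges_ok {V : Type*} [Fintype V] (G : SimpleGraph V) :
    ∀ e ∈ G.edgeFinset, ¬ e.IsDiag := fun _ he =>
  G.not_isDiag_of_mem_edgeSet (mem_edgeFinset.1 he)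

lemma starEdge_card {V : Type*} [Fintype V] (G : SimpleGraph V) (w x y : V)
    (h : StarEdge G w x y) : G.edgeFinset.card = Fintype.card V := by
  obtain ⟨hx, hy, hxy, hadj⟩ := h
  have hE : G.edgeFinset = insert s(x, y) ((univ.erase w).image (fun a => s(w, a))) := by
    ext e
    induction e using Sym2.ind with | _ a b
    simp only [mem_edgeFinset, mem_edgeSet, hadj, mem_insert, mem_image, mem_erase, mem_univ,
      and_true, Sym2.eq_iff]
    constructor
    · rintro ⟨hab, rfl | rfl | h⟩
      · right; exact ⟨b, hab.symm, by simp⟩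
      · right; exact ⟨a, hab, by simp⟩
      · left; exact h
    · rintro (h | ⟨c, hc, ⟨rfl, rfl⟩ | ⟨rfl, rfl⟩⟩)
      · refine ⟨?_, Or.inr (Or.inr h)⟩
        rcases h with ⟨rfl, rfl⟩ | ⟨rfl, rfl⟩
        · exact hxy
        · exact hxy.symm
      · exact ⟨hc.symm, by simp⟩
      · exact ⟨hc, by simp⟩
  rw [hE, Finset.card_insert_of_notMem, Finset.card_image_of_injective,
    Finset.card_erase_add_one (mem_univ _), Finset.card_univ]
  · intro a b hab
    exact Sym2.congr_right.1 hab
  · intro h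
    obtain ⟨a, -, h⟩ := mem_image.1 h
    rcases Sym2.eq_iff.1 h with ⟨h, -⟩ | ⟨h, -⟩
    · exact hx h.symm
    · exact hy h.symm

lemma starEdge_split {V : Type*} [Fintype V] (G : SimpleGraph V) (w x y : V)
    (h : StarEdge G w x y) (S : Finset (Sym2 V)) (hS : S ⊆ G.edgeFinset) (hs : Split S) :
    s(x, y) ∈ S ∧ s(w, x) ∉ S ∧ s(w, y) ∉ S ∧ S ≠ {s(x, y)} := by
  obtain ⟨hx, hy, hxy, hadj⟩ := h
  have hmiss : ∀ e ∈ S, w ∉ e → e = s(x, y) := by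
    intro e he hw
    have := mem_edgeFinset.1 (hS he)
    induction e using Sym2.ind with | _ a b
    rw [mem_edgeSet, hadj] at this
    rw [Sym2.mem_iff, not_or] at hw
    rcases this.2 with h | h | h
    · exact absurd h.symm hw.1
    · exact absurd h.symm hw.2
    · exact h
  have hs1 : S ≠ {s(x, y)} := by
    rintro rfl
    exact singleton_not_bad _ (Or.inr hs)
  obtain ⟨X, ⟨a, ha, haX⟩, ⟨b, hb, hbX⟩, hX⟩ := hs
  have hcross : ∀ u v, s(u, v) ∈ S → (u ∈ X ↔ v ∈ X) := by
    intro u v huv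
    have := hX _ huv
    simp only [Sym2.mem_iff, forall_eq_or_imp, forall_eq] at this
    tauto
  by_cases hw : w ∈ X
  · have hbe := hmiss b hb (fun h => hbX w h hw)
    subst hbe
    have h1 := hbX x (by simp)
    have h2 := hbX y (by simp)
    exact ⟨hb, fun h => h1 ((hcross _ _ h).1 hw), fun h => h2 ((hcross _ _ h).1 hw), hs1⟩
  · have hae := hmiss a ha (fun h => hw (haX w h))
    subst hae
    have h1 := haX x (by simp)
    have h2 := haX y (by simp)
    exact ⟨ha, fun h => hw ((hcross _ _ h).2 h1), fun h => hw ((hcross _ _ h).2 h2), hs1⟩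

lemma starEdge_coreIndex {V : Type*} [Fintype V] (G : SimpleGraph V) (w x y : V)
    (h : StarEdge G w x y) (n : ℕ) (hV : Fintype.card V = n) (hn : 4 ≤ n) :
    coreIndex G = 7 * 2 ^ (n - 3) + n := by
  have hcard := (starEdge_card G w x y h).trans hV
  have hsp := starEdge_split G w x y h
  obtain ⟨hx, hy, hxy, hadj⟩ := h
  have hc : s(x, y) ∈ G.edgeFinset := by
    rw [mem_edgeFinset, mem_edgeSet, hadj]; exact ⟨hxy, by simp⟩
  have ha : s(w, x) ∈ G.edgeFinset := by
    rw [mem_edgeFinset, mem_edgeSet, hadj]; exact ⟨hx.symm, by simp⟩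
  have hb : s(w, y) ∈ G.edgeFinset := by
    rw [mem_edgeFinset, mem_edgeSet, hadj]; exact ⟨hy.symm, by simp⟩
  have hnb : ¬ Bad G.edgeFinset := by
    rintro (h | h)
    · rw [h] at hc; simp at hc
    · exact (hsp _ (Finset.Subset.refl _) h).2.1 ha
  have hcov : (cov G.edgeFinset).card = n := by
    rw [← hV, ← Finset.card_univ]
    congr 1
    ext v
    simp only [cov, mem_filter, mem_univ, true_and, iff_true]
    by_cases hv : v = w
    · subst hv; exact ⟨_, ha, Sym2.mem_mk_left _ _⟩
    · refine ⟨s(w, v), ?_, Sym2.mem_mk_right _ _⟩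
      rw [mem_edgeFinset, mem_edgeSet, hadj]
      exact ⟨fun h => hv h.symm, by simp⟩
  have hlow := (main n G.edgeFinset (edges_ok G) hnb hcov hcard).1
  let R := ((G.edgeFinset.erase s(x, y)).erase s(w, x)).erase s(w, y)
  have hR : R.card + 3 = n := by
    have e1 : s(w, x) ≠ s(x, y) := by
      intro h
      rcases Sym2.eq_iff.1 h with ⟨h, -⟩ | ⟨h, -⟩
      · exact hx h.symm
      · exact hy h.symm
    have e2 : s(w, y) ≠ s(x, y) := by
      intro h
      rcases Sym2.eq_iff.1 h with ⟨h, -⟩ | ⟨h, -⟩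
      · exact hx h.symm
      · exact hy h.symm
    have e3 : s(w, y) ≠ s(w, x) := by
      intro h
      rw [Sym2.congr_right] at h
      exact hxy h.symm
    have h1 := Finset.card_erase_add_one hc
    have h2 := Finset.card_erase_add_one (mem_erase.2 ⟨e1, ha⟩)
    have h3 := Finset.card_erase_add_one (mem_erase.2 ⟨e3, mem_erase.2 ⟨e2, hb⟩⟩)
    simp only [R]
    omega
  have hsub : bads G.edgeFinset ⊆
      R.powerset.image (fun T => if T = ∅ then ∅ else insert s(x, y) T) := by
    intro S hS
    obtain ⟨h1, h2⟩ := mem_filter.1 hS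
    rw [Finset.mem_powerset] at h1
    rcases h2 with rfl | h2
    · exact mem_image.2 ⟨∅, by simp, by simp⟩
    · obtain ⟨p1, p2, p3, p4⟩ := hsp S h1 h2
      refine mem_image.2 ⟨S.erase s(x, y), ?_, ?_⟩
      · rw [Finset.mem_powerset]
        intro e he
        obtain ⟨q1, q2⟩ := mem_erase.1 he
        refine mem_erase.2 ⟨?_, mem_erase.2 ⟨?_, mem_erase.2 ⟨q1, h1 q2⟩⟩⟩
        · rintro rfl; exact p3 q2
        · rintro rfl; exact p2 q2
      · rw [if_neg, Finset.insert_erase p1]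
        intro h0
        apply p4
        rw [← Finset.insert_erase p1, h0]
        simp
  have hup := (Finset.card_le_card hsub).trans Finset.card_image_le
  rw [Finset.card_powerset] at hup
  have hce := coreIndex_eq G
  rw [hcard, hV] at hce
  obtain ⟨m, rfl⟩ : ∃ m, n = m + 3 := ⟨n - 3, by omega⟩
  have hRm : R.card = m := by omega
  rw [hRm] at hup
  rw [pow_add] at hce hlow
  simp only [Nat.add_sub_cancel]
  omega

lemma pineapple_star (n : ℕ) :
    StarEdge (pineapple n 3) (Sum.inl 0) (Sum.inl 1) (Sum.inl 2) := by
  refine ⟨by simp, by simp, by simp, ?_⟩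
  rintro (a | a) (b | b)
  · simp only [pineapple, fromRel_adj]
    fin_cases a <;> fin_cases b <;> simp [cycleGraph_adj] <;> decide
  · simp only [pineapple, fromRel_adj]
    fin_cases a <;> simp
  · simp only [pineapple, fromRel_adj]
    fin_cases b <;> simp
  · simp [pineapple, fromRel_adj]

lemma exists_starEdge {V : Type*} [Fintype V] (G : SimpleGraph V) (w : V)
    (hE : G.edgeFinset.card = Fintype.card V) (hw : dg G.edgeFinset w + 1 = Fintype.card V) :
    ∃ x y, StarEdge G w x y := by
  have hsum := Finset.card_filter_add_card_filter_not (s := G.edgeFinset) (fun d => w ∈ d)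
  have h1 : (G.edgeFinset.filter (fun d => ¬ w ∈ d)).card = 1 := by
    have : dg G.edgeFinset w = (G.edgeFinset.filter (fun d => w ∈ d)).card := rfl
    omega
  obtain ⟨c, hc⟩ := Finset.card_eq_one.1 h1
  have hsub : G.edgeFinset.filter (fun d => w ∈ d) ⊆ (univ.erase w).image (fun a => s(w, a)) := by
    intro e he
    obtain ⟨he, a, rfl⟩ := mem_filter.1 he
    refine mem_image.2 ⟨a, mem_erase.2 ⟨?_, mem_univ _⟩, rfl⟩
    rintro rfl
    exact edges_ok G _ he (by simp)
  have heq := Finset.eq_of_subset_of_card_le hsub (by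
    refine Finset.card_image_le.trans ?_
    rw [Finset.card_erase_of_mem (mem_univ _), Finset.card_univ, ← hw]
    exact le_rfl)
  induction c using Sym2.ind with | _ x y
  have hxy : s(x, y) ∈ G.edgeFinset ∧ ¬ w ∈ s(x, y) :=
    mem_filter.1 (hc ▸ Finset.mem_singleton_self _)
  obtain ⟨hxyE, hwxy⟩ := hxy
  rw [Sym2.mem_iff, not_or] at hwxy
  rw [mem_edgeFinset, mem_edgeSet] at hxyE
  have hstar : ∀ a, a ≠ w → G.Adj w a := by
    intro a ha
    have : s(w, a) ∈ (univ.erase w).image (fun a => s(w, a)) :=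
      mem_image.2 ⟨a, mem_erase.2 ⟨ha, mem_univ _⟩, rfl⟩
    rw [← heq] at this
    exact mem_edgeFinset.1 (mem_filter.1 this).1
  refine ⟨x, y, fun h => hwxy.1 h.symm, fun h => hwxy.2 h.symm, hxyE.ne, ?_⟩
  intro a b
  constructor
  · intro hab
    refine ⟨hab.ne, ?_⟩
    by_cases h : w ∈ s(a, b)
    · rcases Sym2.mem_iff.1 h with h | h
      · left; exact h.symm
      · right; left; exact h.symm
    · right; right
      have : s(a, b) ∈ G.edgeFinset.filter (fun d => ¬ w ∈ d) :=
        mem_filter.2 ⟨mem_edgeFinset.2 hab, h⟩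
      rw [hc, Finset.mem_singleton] at this
      exact this
  · rintro ⟨hab, rfl | rfl | h⟩
    · exact hstar b hab.symm
    · exact (hstar a hab).symm
    · rw [← mem_edgeSet, h]; exact hxyE

lemma starEdge_iso {V W : Type*} [Fintype V] [Fintype W] (G : SimpleGraph V) (H : SimpleGraph W)
    (w x y : V) (w' x' y' : W) (hG : StarEdge G w x y) (hH : StarEdge H w' x' y')
    (hc : Fintype.card V = Fintype.card W) : Nonempty (G ≃g H) := by
  obtain ⟨hx, hy, hxy, hadj⟩ := hG
  obtain ⟨hx', hy', hxy', hadj'⟩ := hH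
  obtain ⟨e, e1, e2, e3⟩ : ∃ e : V ≃ W, e w = w' ∧ e x = x' ∧ e y = y' := by
    let e0 := Fintype.equivOfCardEq hc
    let e1 := e0.trans (Equiv.swap (e0 w) w')
    have h1 : e1 w = w' := by simp [e1]
    let e2 := e1.trans (Equiv.swap (e1 x) x')
    have h2 : e2 x = x' := by simp [e2]
    have h3 : e2 w = w' := by
      simp only [e2, Equiv.trans_apply]
      rw [Equiv.swap_apply_of_ne_of_ne, h1]
      · exact fun h => hx (e1.injective h).symm
      · rw [h1]; exact hx'.symm
    refine ⟨e2.trans (Equiv.swap (e2 y) y'), ?_, ?_, by simp⟩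
    · rw [Equiv.trans_apply, Equiv.swap_apply_of_ne_of_ne, h3]
      · exact fun h => hy (e2.injective h).symm
      · rw [h3]; exact hy'.symm
    · rw [Equiv.trans_apply, Equiv.swap_apply_of_ne_of_ne, h2]
      · exact fun h => hxy (e2.injective h)
      · rw [h2]; exact hxy'
  refine ⟨⟨e, ?_⟩⟩
  intro a b
  rw [hadj, hadj', ← e1, ← e2, ← e3]
  simp [Sym2.eq_iff]

lemma starEdge_of_iso {V W : Type*} (G : SimpleGraph V) (H : SimpleGraph W)
    (w x y : W) (hH : StarEdge H w x y) (φ : G ≃g H) :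
    StarEdge G (φ.symm w) (φ.symm x) (φ.symm y) := by
  obtain ⟨hx', hy', hxy', hadj'⟩ := hH
  refine ⟨by simpa using hx', by simpa using hy', by simpa using hxy', ?_⟩
  intro a b
  rw [← φ.map_adj_iff, hadj']
  have key : ∀ a u, φ a = u ↔ a = φ.symm u := by
    intro a u
    constructor
    · rintro rfl; simp
    · rintro rfl; simp
  simp [Sym2.eq_iff, key]

lemma conn_not_bad {V : Type*} [Fintype V] (G : SimpleGraph V) (hG : G.Connected)
    (hne : G.edgeFinset ≠ ∅) : ¬ Bad G.edgeFinset := by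
  rintro (h | ⟨X, ⟨e, he, heX⟩, ⟨f, hf, hfX⟩, hX⟩)
  · exact hne h
  · induction e using Sym2.ind with | _ a b
    induction f using Sym2.ind with | _ c d
    obtain ⟨p⟩ := hG.preconnected a c
    have key : ∀ {u v : V} (p : G.Walk u v), u ∈ X → v ∈ X := by
      intro u v p
      induction p with
      | nil => exact id
      | cons hadj _ ih =>
        intro hu
        apply ih
        rcases hX s(_, _) (mem_edgeFinset.2 (G.mem_edgeSet.2 hadj)) with h1 | h1
        · exact h1 _ (Sym2.mem_mk_right _ _)
        · exact absurd hu (h1 _ (Sym2.mem_mk_left _ _))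
    exact hfX c (Sym2.mem_mk_left _ _) (key p (heX a (Sym2.mem_mk_left _ _)))

lemma conn_cov {V : Type*} [Fintype V] (G : SimpleGraph V) (hG : G.Connected)
    (hn : 1 < Fintype.card V) : (cov G.edgeFinset).card = Fintype.card V := by
  rw [← Finset.card_univ]
  congr 1
  ext v
  simp only [cov, mem_filter, mem_univ, true_and, iff_true]
  obtain ⟨u, hu⟩ := Fintype.exists_ne_of_one_lt_card hn v
  obtain ⟨p⟩ := hG.preconnected v u
  cases p with
  | nil => exact absurd rfl hu
  | cons hadj _ => exact ⟨s(v, _), mem_edgeFinset.2 hadj, Sym2.mem_mk_left _ _⟩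

end CoreIdx

/-- Among all unicyclic graphs on `n ≥ 4` vertices, the pineapple graph `U^p_{n,3}`
uniquely maximizes the core index, with `F(U^p_{n,3}) = 7·2^(n-3) + n`. -/
theorem pineapple_three_maximizes_coreIndex (n : ℕ) (hn : 4 ≤ n) :
    (∀ {V : Type} [Fintype V] (G : SimpleGraph V), Fintype.card V = n →
      G.Connected → Nat.card G.edgeSet = n →
      (coreIndex G ≤ coreIndex (pineapple n 3) ∧
        (coreIndex G = coreIndex (pineapple n 3) ↔ Nonempty (G ≃g pineapple n 3)))) ∧
    coreIndex (pineapple n 3) = 7 * 2 ^ (n - 3) + n := by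
  classical
  have hcP : Fintype.card (Fin 3 ⊕ Fin (n - 3)) = n := by
    simp only [Fintype.card_sum, Fintype.card_fin]
    omega
  have hP : coreIndex (pineapple n 3) = 7 * 2 ^ (n - 3) + n :=
    CoreIdx.starEdge_coreIndex _ _ _ _ (CoreIdx.pineapple_star n) n hcP hn
  refine ⟨?_, hP⟩
  intro V _ G hV hG hE
  rw [hP]
  have hEc : G.edgeFinset.card = n := by
    rw [← hE, Nat.card_eq_fintype_card, edgeFinset_card]
  have hne : G.edgeFinset ≠ ∅ := by
    intro h
    rw [h, Finset.card_empty] at hEc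
    omega
  have hnb := CoreIdx.conn_not_bad G hG (by convert hne)
  have hcov := (CoreIdx.conn_cov G hG (by omega)).trans hV
  have hm := CoreIdx.main n _ (CoreIdx.edges_ok G) hnb hcov (by convert hEc)
  have hce := CoreIdx.coreIndex_eq G
  have hEc' : ∀ i : Fintype G.edgeSet, (@SimpleGraph.edgeFinset _ G i).card = n := by
    intro i
    convert hEc
  rw [hEc', hV] at hce
  obtain ⟨hlow, heq⟩ := hm
  have hpow : 2 ^ n = 8 * 2 ^ (n - 3) := by
    conv_lhs => rw [show n = (n - 3) + 3 by omega, pow_add]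
    ring
  refine ⟨by omega, ?_, ?_⟩
  · intro h
    obtain ⟨w, hw⟩ := heq hn (by omega)
    obtain ⟨x, y, hs⟩ := CoreIdx.exists_starEdge G w (by rw [hEc', hV]) (by rw [hw, hV])
    exact CoreIdx.starEdge_iso G _ w x y _ _ _ hs (CoreIdx.pineapple_star n) (by rw [hV, hcP])
  · rintro ⟨φ⟩
    exact CoreIdx.starEdge_coreIndex G _ _ _
      (CoreIdx.starEdge_of_iso G _ _ _ _ (CoreIdx.pineapple_star n) φ) n hV hn
end

section
/- For k ≥ 2 and n ≥ k+1, let T_{n,k} be the tree with a central vertex v of degree k such that T_{n,k} − v is the disjoint union of r paths P_{q+1} and (k−r) paths P_q, where q = ⌊(n−1)/k⌋ and r = n − 1 − kq. Then F(T_{n,k}) = (q+2)^r (q+1)^{k−r} + (q+1)(qk + 2r)/2, and T_{n,k} maximizes F over all trees on n vertices with exactly k leaves (for 2 ≤ k ≤ n−3). -/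
open SimpleGraph

/-- The spider tree with a central vertex joined to `r` pendant paths on `q + 1`
vertices and `k - r` pendant paths on `q` vertices. -/
def spider (k q r : ℕ) : SimpleGraph (Unit ⊕ ((Fin r × Fin (q + 1)) ⊕ (Fin (k - r) × Fin q))) :=
  SimpleGraph.fromRel (fun x y =>
    (∃ p : Fin r × Fin (q + 1), x = Sum.inl () ∧ y = Sum.inr (Sum.inl p) ∧
      (p.2 : ℕ) = 0) ∨
    (∃ p : Fin (k - r) × Fin q, x = Sum.inl () ∧ y = Sum.inr (Sum.inr p) ∧
      (p.2 : ℕ) = 0) ∨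
    (∃ (i : Fin r) (a b : Fin (q + 1)), x = Sum.inr (Sum.inl (i, a)) ∧
      y = Sum.inr (Sum.inl (i, b)) ∧ (b : ℕ) = (a : ℕ) + 1) ∨
    (∃ (i : Fin (k - r)) (a b : Fin q), x = Sum.inr (Sum.inr (i, a)) ∧
      y = Sum.inr (Sum.inr (i, b)) ∧ (b : ℕ) = (a : ℕ) + 1))

namespace SpiderAux

/-- `G` is a tree rooted at `v`, with parent map `p` and rank function `d`. -/
structure Rooted {V : Type*} (G : SimpleGraph V) (v : V) (p : V → V) (d : V → ℕ) : Prop where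
  adj : ∀ x y, G.Adj x y ↔ (x ≠ v ∧ p x = y) ∨ (y ≠ v ∧ p y = x)
  lt : ∀ x, x ≠ v → d (p x) < d x

/-- `S` is (the vertex set of) a subtree with top vertex `u`. -/
def Top {V : Type*} (v : V) (p : V → V) (u : V) (S : Finset V) : Prop :=
  u ∈ S ∧ ∀ w ∈ S, w ≠ u → w ≠ v ∧ p w ∈ S

lemma exists_rooted {V : Type*} (G : SimpleGraph V) (hG : G.IsTree) (v : V) :
    ∃ p d, Rooted G v p d := by
  classical
  choose P hP hl using fun w => hG.connected.exists_path_of_dist v w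
  have key : ∀ x y, G.Adj x y → G.dist v x = G.dist v y + 1 → (P x).penultimate = y := by
    intro x y h hd
    have hp : ((P y).concat h.symm).IsPath := by
      apply Walk.isPath_of_length_eq_dist
      rw [Walk.length_concat, hl, hd]
    have := (hG.existsUnique_path v x).unique (hP x) hp
    rw [this]
    simp
  refine ⟨fun w => (P w).penultimate, fun w => G.dist v w, ?_, ?_⟩
  · intro x y
    constructor
    · intro h
      rcases hG.dist_eq_dist_add_one_of_adj v h with h1 | h1
      · left
        refine ⟨?_, key x y h h1⟩
        rintro rfl
        simp at h1
      · right
        refine ⟨?_, key y x h.symm h1⟩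
        rintro rfl
        simp at h1
    · rintro (⟨h, rfl⟩ | ⟨h, rfl⟩)
      · exact ((P x).adj_penultimate (Walk.not_nil_of_ne (Ne.symm h))).symm
      · exact ((P y).adj_penultimate (Walk.not_nil_of_ne (Ne.symm h)))
  · intro x hx
    have h := ((P x).adj_penultimate (Walk.not_nil_of_ne (Ne.symm hx))).symm
    have h0 := hG.connected.pos_dist_of_ne (Ne.symm hx)
    have h2 := G.dist_le ((P x).dropLast)
    have : (P x).dropLast.length = (P x).length - 1 := by simp
    have := hl x
    show G.dist v (P x).penultimate < _
    omega

section
variable {V : Type*} {G : SimpleGraph V} {v : V} {p : V → V} {d : V → ℕ}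

lemma exists_good (hR : Rooted G v p d) (H : G.Subgraph) (hH : H.Connected) :
    ∃ u ∈ H.verts, ∀ w ∈ H.verts, w ≠ u → w ≠ v ∧ H.Adj w (p w) := by
  obtain ⟨u, hu, hmin⟩ : ∃ u ∈ H.verts, ∀ w ∈ H.verts, d u ≤ d w := by
    have hne := hH.nonempty
    let m := sInf (d '' H.verts)
    obtain ⟨u, hu, h⟩ := Nat.sInf_mem (hne.image d)
    exact ⟨u, hu, fun w hw => h ▸ Nat.sInf_le ⟨w, hw, rfl⟩⟩
  refine ⟨u, hu, ?_⟩
  have good : ∀ w ∈ H.verts,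
      Relation.ReflTransGen (fun y x => x ≠ v ∧ p x = y ∧ H.Adj x y) u w := by
    intro w hw
    have hr : H.coe.Reachable ⟨u, hu⟩ ⟨w, hw⟩ := hH.coe.preconnected _ _
    rw [reachable_iff_reflTransGen] at hr
    suffices ∀ z, Relation.ReflTransGen H.coe.Adj ⟨u, hu⟩ z →
      Relation.ReflTransGen (fun y x => x ≠ v ∧ p x = y ∧ H.Adj x y) u z.1 from this _ hr
    intro z hz
    induction hz with
    | refl => exact .refl
    | @tail a b _ hab ih =>
      have hab' : H.Adj a b := hab
      rcases (hR.adj _ _).1 hab'.adj_sub with ⟨h1, h2⟩ | ⟨h1, h2⟩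
      · rcases Relation.ReflTransGen.cases_tail ih with h | ⟨c, hc, h3, h4, h5⟩
        · exfalso
          have := hR.lt _ h1
          have := hmin _ b.2
          rw [h2, h] at *
          omega
        · rw [← h2, h4]; exact hc
      · exact ih.tail ⟨h1, h2, hab'.symm⟩
  intro w hw hwu
  rcases Relation.ReflTransGen.cases_tail (good w hw) with h | ⟨c, hc, h3, h4, h5⟩
  · exact absurd h hwu
  · exact ⟨h3, h4 ▸ h5⟩

lemma connected_of_top (hR : Rooted G v p d) (u : V) (S : Finset V) (h : Top v p u S) :
    ((⊤ : G.Subgraph).induce (S : Set V)).Connected := by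
  rw [Subgraph.connected_iff']
  have key : ∀ n, ∀ w (hw : w ∈ S), d w < n →
      ((⊤ : G.Subgraph).induce (S : Set V)).coe.Reachable ⟨w, hw⟩ ⟨u, h.1⟩ := by
    intro n
    induction n with
    | zero => intro w hw h; omega
    | succ n ih =>
      intro w hw hd
      by_cases hwu : w = u
      · subst hwu; exact Reachable.refl _
      · obtain ⟨h1, h2⟩ := h.2 w hw hwu
        have := hR.lt w h1
        refine Reachable.trans (Adj.reachable ?_) (ih (p w) h2 (by omega))
        simp only [Subgraph.coe_adj, Subgraph.induce_adj, Subgraph.top_adj]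
        exact ⟨hw, h2, (hR.adj _ _).2 (Or.inl ⟨h1, rfl⟩)⟩
  have : Nonempty ((⊤ : G.Subgraph).induce (S : Set V)).verts := ⟨⟨u, h.1⟩⟩
  refine Connected.mk ?_
  intro x y
  exact (key _ x.1 x.2 (Nat.lt_succ_self _)).trans (key _ y.1 y.2 (Nat.lt_succ_self _)).symm

lemma eq_induce (hR : Rooted G v p d) (H : G.Subgraph) (hH : H.Connected) :
    (⊤ : G.Subgraph).induce H.verts = H := by
  obtain ⟨u, hu, h⟩ := exists_good hR H hH
  ext x y
  · simp
  · simp only [Subgraph.induce_adj, Subgraph.top_adj]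
    constructor
    · rintro ⟨hx, hy, hxy⟩
      rcases (hR.adj _ _).1 hxy with ⟨h1, h2⟩ | ⟨h1, h2⟩
      · by_cases hxu : x = u
        · subst hxu
          have hyu : y ≠ x := hxy.ne'
          -- y is the parent of the top: then y has parent chain; use rank
          exfalso
          have : ∀ n, ∀ w ∈ H.verts, d w < n → w ≠ x → d x < d w := by
            intro n
            induction n with
            | zero => intro w _ h; omega
            | succ n ih =>
              intro w hw hd hwx
              obtain ⟨h3, h4⟩ := h w hw hwx
              have h5 := hR.lt w h3
              by_cases hp : p w = x
              · rw [← hp]; exact h5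
              · have := ih (p w) h4.snd_mem (by omega) hp
                omega
          have h6 := this _ y hy (Nat.lt_succ_self _) hyu
          have := hR.lt x h1
          rw [h2] at this
          omega
        · have := (h x hx hxu).2
          rwa [h2] at this
      · by_cases hyu : y = u
        · subst hyu
          have hyu : x ≠ y := hxy.ne
          exfalso
          have : ∀ n, ∀ w ∈ H.verts, d w < n → w ≠ y → d y < d w := by
            intro n
            induction n with
            | zero => intro w _ h; omega
            | succ n ih =>
              intro w hw hd hwx
              obtain ⟨h3, h4⟩ := h w hw hwx
              have h5 := hR.lt w h3
              by_cases hp : p w = y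
              · rw [← hp]; exact h5
              · have := ih (p w) h4.snd_mem (by omega) hp
                omega
          have h6 := this _ x hx (Nat.lt_succ_self _) hyu
          have := hR.lt y h1
          rw [h2] at this
          omega
        · have := (h y hy hyu).2
          rw [h2] at this
          exact this.symm
    · intro h
      exact ⟨h.fst_mem, h.snd_mem, h.adj_sub⟩

open scoped Classical in
lemma card_conn [Fintype V] (hR : Rooted G v p d) (Q : Set V → Prop) :
    Nat.card {H : G.Subgraph // H.Connected ∧ Q H.verts} =
      (Finset.univ.filter fun S : Finset V => (∃ u, Top v p u S) ∧ Q (S : Set V)).card := by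
  rw [← Fintype.card_coe, ← Nat.card_eq_fintype_card]
  refine Nat.card_congr
    ⟨fun H => ⟨H.1.verts.toFinset, ?_⟩, fun S => ⟨(⊤ : G.Subgraph).induce (S.1 : Set V), ?_⟩, ?_, ?_⟩
  · obtain ⟨u, hu, h⟩ := exists_good hR H.1 H.2.1
    simp only [Finset.mem_filter, Finset.mem_univ, true_and, Set.coe_toFinset]
    refine ⟨⟨u, by simpa using hu, ?_⟩, H.2.2⟩
    intro w hw hwu
    have := h w (by simpa using hw) hwu
    exact ⟨this.1, by simpa using this.2.snd_mem⟩
  · have := S.2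
    simp only [Finset.mem_filter, Finset.mem_univ, true_and] at this
    obtain ⟨⟨u, hu⟩, h⟩ := this
    exact ⟨connected_of_top hR u _ hu, h⟩
  · intro H
    apply Subtype.ext
    simpa using eq_induce hR H.1 H.2.1
  · intro S
    apply Subtype.ext
    simp

end

section
open scoped Classical
variable {V : Type*} [Fintype V] {v : V} {p : V → V} {d : V → ℕ}

/-- The children of `u`. -/
noncomputable def ch (v : V) (p : V → V) (u : V) : Finset V :=
  Finset.univ.filter fun w => w ≠ v ∧ p w = u

/-- The subtrees with top `u`. -/
noncomputable def tops (v : V) (p : V → V) (u : V) : Finset (Finset V) :=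
  Finset.univ.filter fun S => Top v p u S

/-- The number of subtrees with top `u`. -/
noncomputable def nt (v : V) (p : V → V) (u : V) : ℕ := (tops v p u).card

/-- The descendants of `u`. -/
noncomputable def desc (v : V) (p : V → V) (u : V) : Finset V :=
  Finset.univ.filter fun x => Relation.ReflTransGen (fun y x => x ≠ v ∧ p x = y) u x

lemma mem_ch {u w : V} : w ∈ ch v p u ↔ w ≠ v ∧ p w = u := by simp [ch]

lemma mem_tops {u : V} {S : Finset V} : S ∈ tops v p u ↔ Top v p u S := by simp [tops]

lemma mem_desc {u x : V} : x ∈ desc v p u ↔ x = u ∨ (x ≠ v ∧ p x ∈ desc v p u) := by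
  simp only [desc, Finset.mem_filter, Finset.mem_univ, true_and]
  constructor
  · intro h
    rcases Relation.ReflTransGen.cases_tail h with h | ⟨c, hc, h1, h2⟩
    · exact Or.inl h
    · exact Or.inr ⟨h1, h2 ▸ hc⟩
  · rintro (h | ⟨h1, h2⟩)
    · rw [h]
    · exact h2.tail ⟨h1, rfl⟩

lemma mem_desc_head {u x : V} :
    x ∈ desc v p u ↔ x = u ∨ ∃ c ∈ ch v p u, x ∈ desc v p c := by
  simp only [desc, Finset.mem_filter, Finset.mem_univ, true_and, mem_ch]
  constructor
  · intro h
    rcases Relation.ReflTransGen.cases_head h with h | ⟨c, hc, h1⟩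
    · exact Or.inl h.symm
    · exact Or.inr ⟨c, hc, h1⟩
  · rintro (h | ⟨c, h1, h2⟩)
    · rw [h]
    · exact Relation.ReflTransGen.head h1 h2

lemma self_mem_desc {u : V} : u ∈ desc v p u := mem_desc.2 (Or.inl rfl)

/-- Induction along the parent map. -/
lemma par_induction (hlt : ∀ x, x ≠ v → d (p x) < d x) (P : V → Prop)
    (h : ∀ x, (x ≠ v → P (p x)) → P x) (x : V) : P x := by
  have : ∀ n, ∀ x, d x < n → P x := by
    intro n
    induction n with
    | zero => intro x hx; omega
    | succ n ih =>
      intro x hx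
      exact h x fun hv => ih _ (by have := hlt x hv; omega)
  exact this _ x (Nat.lt_succ_self _)

lemma rank_desc (hlt : ∀ x, x ≠ v → d (p x) < d x) {u : V} (x : V) :
    x ∈ desc v p u → d u ≤ d x := by
  induction x using par_induction hlt with
  | h x ih =>
    intro hx
    rcases mem_desc.1 hx with rfl | ⟨h1, h2⟩
    · exact le_rfl
    · have := ih h1 h2
      have := hlt x h1
      omega

lemma not_mem_desc_child (hlt : ∀ x, x ≠ v → d (p x) < d x) {y c : V} (hc : c ∈ ch v p y) :
    y ∉ desc v p c := by
  intro h
  have h1 := rank_desc hlt _ h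
  obtain ⟨h2, rfl⟩ := mem_ch.1 hc
  have := hlt c h2
  omega

lemma desc_disj (hlt : ∀ x, x ≠ v → d (p x) < d x) {y c c' : V} (hc : c ∈ ch v p y)
    (hc' : c' ∈ ch v p y) (x : V) : x ∈ desc v p c → x ∈ desc v p c' → c = c' := by
  induction x using par_induction hlt with
  | h x ih =>
    intro h h'
    rcases mem_desc.1 h with rfl | ⟨h1, h2⟩
    · rcases mem_desc.1 h' with rfl | ⟨h1', h2'⟩
      · rfl
      · rw [(mem_ch.1 hc).2] at h2'
        exact absurd h2' (not_mem_desc_child hlt hc')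
    · rcases mem_desc.1 h' with rfl | ⟨h1', h2'⟩
      · rw [(mem_ch.1 hc').2] at h2
        exact absurd h2 (not_mem_desc_child hlt hc)
      · exact ih h1 h2 h2'

lemma desc_root (hlt : ∀ x, x ≠ v → d (p x) < d x) : desc v p v = Finset.univ := by
  ext x
  simp only [Finset.mem_univ, iff_true]
  induction x using par_induction hlt with
  | h x ih =>
    by_cases hx : x = v
    · exact mem_desc.2 (Or.inl hx)
    · exact mem_desc.2 (Or.inr ⟨hx, ih hx⟩)

lemma sum_desc (hlt : ∀ x, x ≠ v → d (p x) < d x) (g : V → ℕ) (u : V) :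
    ∑ x ∈ desc v p u, g x = g u + ∑ c ∈ ch v p u, ∑ x ∈ desc v p c, g x := by
  have : desc v p u = insert u ((ch v p u).biUnion (desc v p)) := by
    ext x
    rw [mem_desc_head]
    simp
  rw [this, Finset.sum_insert, Finset.sum_biUnion]
  · intro c hc c' hc' hne
    rw [Function.onFun, Finset.disjoint_left]
    intro x hx hx'
    exact hne (desc_disj hlt hc hc' x hx hx')
  · simp only [Finset.mem_biUnion, not_exists, not_and]
    intro c hc
    exact not_mem_desc_child hlt hc

lemma top_subset (hlt : ∀ x, x ≠ v → d (p x) < d x) {u : V} {S : Finset V} (h : Top v p u S) :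
    S ⊆ desc v p u := by
  intro x
  induction x using par_induction hlt with
  | h x ih =>
    intro hx
    by_cases hxu : x = u
    · exact mem_desc.2 (Or.inl hxu)
    · obtain ⟨h1, h2⟩ := h.2 x hx hxu
      exact mem_desc.2 (Or.inr ⟨h1, ih h1 h2⟩)

lemma top_unique (hlt : ∀ x, x ≠ v → d (p x) < d x) {u u' : V} {S : Finset V}
    (h : Top v p u S) (h' : Top v p u' S) : u = u' := by
  by_contra hne
  have h1 := rank_desc hlt _ (top_subset hlt h' h.1)
  obtain ⟨h2, h3⟩ := h'.2 u h.1 hne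
  have h4 := rank_desc hlt _ (top_subset hlt h h3)
  have := hlt u h2
  omega

lemma child_mem (hlt : ∀ x, x ≠ v → d (p x) < d x) {y c : V} {S : Finset V} (h : Top v p y S)
    (hc : c ∈ ch v p y) (x : V) : x ∈ S → x ∈ desc v p c → c ∈ S := by
  induction x using par_induction hlt with
  | h x ih =>
    intro hx hxc
    rcases mem_desc.1 hxc with rfl | ⟨h1, h2⟩
    · exact hx
    · have hxy : x ≠ y := by
        rintro rfl
        exact not_mem_desc_child hlt hc hxc
      exact ih h1 (h.2 x hx hxy).2 h2

lemma card_restrict (hlt : ∀ x, x ≠ v → d (p x) < d x) (y : V) (Z : Finset V)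
    (hZ : Z ⊆ ch v p y) :
    (Finset.univ.filter fun S : Finset V => Top v p y S ∧ ∀ c ∈ ch v p y, c ∈ S → c ∈ Z).card =
      ∏ c ∈ Z, (1 + nt v p c) := by
  have hprod : ∏ c ∈ Z, (1 + nt v p c) = (Fintype.piFinset fun c : V =>
      if c ∈ Z then insert ∅ (tops v p c) else {∅}).card := by
    rw [Fintype.card_piFinset, ← Finset.prod_subset (Finset.subset_univ Z)]
    · refine Finset.prod_congr rfl fun c hc => ?_
      rw [if_pos hc, Finset.card_insert_of_notMem, nt, add_comm]
      intro h
      have := (mem_tops.1 h).1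
      simp at this
    · intro c _ hc
      rw [if_neg hc]; rfl
  rw [hprod]
  refine Finset.card_nbij' (fun S c => if c ∈ Z then S ∩ desc v p c else ∅)
    (fun g => insert y (Finset.univ.biUnion g)) ?_ ?_ ?_ ?_
  · intro S hS
    simp only [Finset.coe_filter, Finset.mem_univ, true_and, Set.mem_ofPred_eq] at hS
    obtain ⟨hS, -⟩ := hS
    simp only [Finset.mem_coe, Fintype.mem_piFinset]
    intro c
    split_ifs with hc
    · rw [Finset.mem_insert]
      by_cases he : S ∩ desc v p c = ∅
      · exact Or.inl he
      right
      obtain ⟨x, hx⟩ := Finset.nonempty_iff_ne_empty.2 he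
      rw [Finset.mem_inter] at hx
      have hcS := child_mem hlt hS (hZ hc) x hx.1 hx.2
      rw [mem_tops]
      refine ⟨Finset.mem_inter.2 ⟨hcS, self_mem_desc⟩, ?_⟩
      intro w hw hwc
      rw [Finset.mem_inter] at hw
      rcases mem_desc.1 hw.2 with rfl | ⟨h1, h2⟩
      · exact absurd rfl hwc
      · refine ⟨h1, Finset.mem_inter.2 ⟨(hS.2 w hw.1 ?_).2, h2⟩⟩
        rintro rfl
        exact not_mem_desc_child hlt (hZ hc) hw.2
    · simp
  · intro g hg
    simp only [Finset.mem_coe, Fintype.mem_piFinset] at hg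
    have hg' : ∀ c w, w ∈ g c → c ∈ Z ∧ Top v p c (g c) := by
      intro c w hw
      have := hg c
      split_ifs at this with hc
      · rcases Finset.mem_insert.1 this with h | h
        · rw [h] at hw; simp at hw
        · exact ⟨hc, mem_tops.1 h⟩
      · rw [Finset.mem_singleton.1 this] at hw; simp at hw
    simp only [Finset.coe_filter, Finset.mem_univ, true_and, Set.mem_ofPred_eq]
    refine ⟨⟨Finset.mem_insert_self _ _, ?_⟩, ?_⟩
    · intro w hw hwy
      rcases Finset.mem_insert.1 hw with h | h
      · exact absurd h hwy
      · obtain ⟨c, -, hc⟩ := Finset.mem_biUnion.1 h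
        obtain ⟨h1, h2⟩ := hg' c w hc
        by_cases hwc : w = c
        · subst hwc
          have := mem_ch.1 (hZ h1)
          exact ⟨this.1, by rw [this.2]; exact Finset.mem_insert_self _ _⟩
        · obtain ⟨h3, h4⟩ := h2.2 w hc hwc
          exact ⟨h3, Finset.mem_insert_of_mem (Finset.mem_biUnion.2 ⟨c, Finset.mem_univ _, h4⟩)⟩
    · intro c hc hcS
      rcases Finset.mem_insert.1 hcS with h | h
      · exact absurd (h ▸ self_mem_desc) (not_mem_desc_child hlt hc)
      · obtain ⟨c', -, hc'⟩ := Finset.mem_biUnion.1 h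
        obtain ⟨h1, h2⟩ := hg' c' c hc'
        have := desc_disj hlt hc (hZ h1) c self_mem_desc (top_subset hlt h2 hc')
        rw [this]; exact h1
  · intro S hS
    simp only [Finset.coe_filter, Finset.mem_univ, true_and, Set.mem_ofPred_eq] at hS
    obtain ⟨hS, hSZ⟩ := hS
    ext x
    simp only [Finset.mem_insert, Finset.mem_biUnion, Finset.mem_univ, true_and]
    constructor
    · rintro (rfl | ⟨c, hc⟩)
      · exact hS.1
      · split_ifs at hc
        · exact (Finset.mem_inter.1 hc).1
        · simp at hc
    · intro hx
      rcases mem_desc_head.1 (top_subset hlt hS hx) with h | ⟨c, hc, hxc⟩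
      · exact Or.inl h
      · right
        refine ⟨c, ?_⟩
        rw [if_pos (hSZ c hc (child_mem hlt hS hc x hx hxc))]
        exact Finset.mem_inter.2 ⟨hx, hxc⟩
  · intro g hg
    simp only [Finset.mem_coe, Fintype.mem_piFinset] at hg
    have hg' : ∀ c w, w ∈ g c → c ∈ Z ∧ Top v p c (g c) := by
      intro c w hw
      have := hg c
      split_ifs at this with hc
      · rcases Finset.mem_insert.1 this with h | h
        · rw [h] at hw; simp at hw
        · exact ⟨hc, mem_tops.1 h⟩
      · rw [Finset.mem_singleton.1 this] at hw; simp at hw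
    funext c
    ext x
    dsimp only
    split_ifs with hc
    · simp only [Finset.mem_inter, Finset.mem_insert, Finset.mem_biUnion, Finset.mem_univ, true_and]
      constructor
      · rintro ⟨rfl | ⟨c', hc'⟩, hx⟩
        · exact absurd hx (not_mem_desc_child hlt (hZ hc))
        · obtain ⟨h1, h2⟩ := hg' c' x hc'
          rw [desc_disj hlt (hZ hc) (hZ h1) x hx (top_subset hlt h2 hc')]
          exact hc'
      · intro hx
        obtain ⟨h1, h2⟩ := hg' c x hx
        exact ⟨Or.inr ⟨c, hx⟩, top_subset hlt h2 hx⟩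
    · simp only [Finset.notMem_empty, false_iff]
      intro hx
      exact hc (hg' c x hx).1

lemma nt_eq (hlt : ∀ x, x ≠ v → d (p x) < d x) (y : V) :
    nt v p y = ∏ c ∈ ch v p y, (1 + nt v p c) := by
  rw [← card_restrict hlt y _ (Finset.Subset.refl _), nt, tops]
  congr 1
  ext S
  simp only [Finset.mem_filter, Finset.mem_univ, true_and]
  exact ⟨fun h => ⟨h, fun c hc _ => hc⟩, fun h => h.1⟩

/-- Uniqueness of the solution of the recursion. -/
lemma nt_unique (hlt : ∀ x, x ≠ v → d (p x) < d x) (g : V → ℕ)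
    (hg : ∀ y, g y = ∏ c ∈ ch v p y, (1 + g c)) (y : V) : nt v p y = g y := by
  have key : ∀ n, ∀ y, (desc v p y).card < n → nt v p y = g y := by
    intro n
    induction n with
    | zero => intro y h; omega
    | succ n ih =>
      intro y hy
      rw [nt_eq hlt, hg]
      refine Finset.prod_congr rfl fun c hc => ?_
      rw [ih c]
      have h1 := sum_desc hlt (fun _ => 1) y
      simp only [Finset.sum_const, smul_eq_mul, mul_one] at h1
      have h2 := Finset.single_le_sum (f := fun c => (desc v p c).card)
        (fun _ _ => Nat.zero_le _) hc
      omega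
  exact key _ y (Nat.lt_succ_self _)

lemma coreIndex_eq {G : SimpleGraph V} (hR : Rooted G v p d) :
    coreIndex G = ∑ u, nt v p u := by
  have h := card_conn hR (fun _ => True)
  simp only [and_true] at h
  rw [coreIndex, h]
  have : (Finset.univ.filter fun S : Finset V => ∃ u, Top v p u S) =
      Finset.univ.biUnion (tops v p) := by
    ext S
    simp [mem_tops]
  rw [this, Finset.card_biUnion]
  · rfl
  · intro u _ u' _ hne
    rw [Function.onFun, Finset.disjoint_left]
    intro S hS hT
    exact hne (top_unique hR.lt (mem_tops.1 hS) (mem_tops.1 hT))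

/-- The number of connected subgraphs containing `x`. -/
noncomputable def through (G : SimpleGraph V) (x : V) : ℕ :=
  Nat.card {H : G.Subgraph // H.Connected ∧ x ∈ H.verts}

lemma center_ineq {G : SimpleGraph V} (hR : Rooted G v p d)
    (hmax : ∀ x, through G x ≤ through G v) (u : V) (hu : u ∈ ch v p v) :
    nt v p u ≤ ∏ c ∈ (ch v p v).erase u, (1 + nt v p c) := by
  have hlt := hR.lt
  have hu' := mem_ch.1 hu
  have hm := hmax u
  rw [through, through, card_conn hR (fun s => u ∈ s), card_conn hR (fun s => v ∈ s)] at hm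
  simp only [Finset.mem_coe] at hm
  rw [← card_restrict hlt v _ (Finset.erase_subset _ _), nt]
  set A := Finset.univ.filter fun S : Finset V => Top v p v S ∧ u ∈ S with hA
  set B := Finset.univ.filter fun S : Finset V =>
    Top v p v S ∧ ∀ c ∈ ch v p v, c ∈ S → c ∈ (ch v p v).erase u with hB
  have h1 : (Finset.univ.filter fun S : Finset V => (∃ u, Top v p u S) ∧ u ∈ S) =
      tops v p u ∪ A := by
    ext S
    simp only [hA, Finset.mem_filter, Finset.mem_univ, true_and, Finset.mem_union, mem_tops]
    constructor
    · rintro ⟨⟨w, hw⟩, hS⟩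
      by_cases huw : u = w
      · subst huw; exact Or.inl hw
      · right
        obtain ⟨h2, h3⟩ := hw.2 u hS huw
        rw [hu'.2] at h3
        by_cases hvw : v = w
        · subst hvw; exact ⟨hw, hS⟩
        · exact absurd rfl (hw.2 v h3 hvw).1
    · rintro (h | ⟨h, h'⟩)
      · exact ⟨⟨u, h⟩, h.1⟩
      · exact ⟨⟨v, h⟩, h'⟩
  have h2 : (Finset.univ.filter fun S : Finset V => (∃ u, Top v p u S) ∧ v ∈ S) = B ∪ A := by
    ext S
    simp only [hA, hB, Finset.mem_filter, Finset.mem_univ, true_and, Finset.mem_union]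
    constructor
    · rintro ⟨⟨w, hw⟩, hS⟩
      have : v = w := by
        by_contra hvw
        exact (hw.2 v hS hvw).1 rfl
      subst this
      by_cases h : u ∈ S
      · exact Or.inr ⟨hw, h⟩
      · left
        refine ⟨hw, fun c hc hcS => Finset.mem_erase.2 ⟨?_, hc⟩⟩
        rintro rfl
        exact h hcS
    · rintro (⟨h, -⟩ | ⟨h, -⟩)
      · exact ⟨⟨v, h⟩, h.1⟩
      · exact ⟨⟨v, h⟩, h.1⟩
  have h3 : Disjoint (tops v p u) A := by
    rw [Finset.disjoint_left]
    intro S hS hS'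
    simp only [hA, Finset.mem_filter, Finset.mem_univ, true_and] at hS'
    exact hu'.1 (top_unique hlt (mem_tops.1 hS) hS'.1)
  have h4 := Finset.card_union_le B A
  rw [h1, h2, Finset.card_union_of_disjoint h3] at hm
  omega

end

section
open scoped Classical

lemma prod_ineq {ι : Type*} (s : Finset ι) (x y : ι → ℕ) :
    ∏ j ∈ s, x j + ∑ j ∈ s, y j * ∏ i ∈ s.erase j, x i ≤ ∏ j ∈ s, (x j + y j) := by
  induction s using Finset.induction_on with
  | empty => simp
  | insert i s hi ih =>
    rw [Finset.prod_insert hi, Finset.sum_insert hi, Finset.prod_insert hi,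
      Finset.erase_insert hi]
    have h1 : ∑ j ∈ s, y j * ∏ l ∈ (insert i s).erase j, x l =
        x i * ∑ j ∈ s, y j * ∏ l ∈ s.erase j, x l := by
      rw [Finset.mul_sum]
      refine Finset.sum_congr rfl fun j hj => ?_
      have hij : i ≠ j := by rintro rfl; exact hi hj
      rw [Finset.erase_insert_of_ne hij, Finset.prod_insert]
      · ring
      · intro h; exact hi (Finset.mem_of_mem_erase h)
    rw [h1]
    have h2 : ∏ j ∈ s, x j ≤ ∏ j ∈ s, (x j + y j) := le_trans (Nat.le_add_right _ _) ih
    nlinarith [Nat.mul_le_mul_left (x i) ih, Nat.mul_le_mul_left (y i) h2]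

/-- Triangular numbers. -/
def tri (a : ℕ) : ℕ := (a + 1).choose 2

lemma tri_succ (a : ℕ) : tri (a + 1) = tri a + (a + 1) := by
  simp only [tri]
  rw [Nat.choose_succ_succ' (a + 1) 1]
  simp
  ring

/-- The product of all `a + 1`. -/
def mprod (M : Multiset ℕ) : ℕ := (M.map (· + 1)).prod

/-- The sum of the triangular numbers. -/
def mtri (M : Multiset ℕ) : ℕ := (M.map tri).sum

@[simp] lemma mprod_zero : mprod 0 = 1 := rfl
@[simp] lemma mtri_zero : mtri 0 = 0 := rfl
@[simp] lemma mprod_add (M N : Multiset ℕ) : mprod (M + N) = mprod M * mprod N := by simp [mprod]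
@[simp] lemma mtri_add (M N : Multiset ℕ) : mtri (M + N) = mtri M + mtri N := by simp [mtri]
@[simp] lemma mprod_cons (a : ℕ) (M : Multiset ℕ) : mprod (a ::ₘ M) = (a + 1) * mprod M := by
  simp [mprod]
@[simp] lemma mtri_cons (a : ℕ) (M : Multiset ℕ) : mtri (a ::ₘ M) = tri a + mtri M := by
  simp [mtri]

lemma mprod_pos (M : Multiset ℕ) : 1 ≤ mprod M := by
  induction M using Multiset.induction_on with
  | empty => simp
  | cons a M ih => rw [mprod_cons]; exact Nat.mul_pos (Nat.succ_pos _) ih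

lemma msum {ι : Type*} (s : Finset ι) (N : ι → Multiset ℕ) :
    Multiset.card (∑ i ∈ s, N i) = ∑ i ∈ s, Multiset.card (N i) ∧
    (∑ i ∈ s, N i).sum = ∑ i ∈ s, (N i).sum ∧
    mprod (∑ i ∈ s, N i) = ∏ i ∈ s, mprod (N i) ∧
    mtri (∑ i ∈ s, N i) = ∑ i ∈ s, mtri (N i) := by
  induction s using Finset.induction_on with
  | empty => simp
  | insert i s hi ih =>
    obtain ⟨h1, h2, h3, h4⟩ := ih
    simp [Finset.sum_insert hi, Finset.prod_insert hi, h1, h2, h3, h4]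

variable {V : Type*} [Fintype V] {v : V} {p : V → V} {d : V → ℕ}

lemma branch (hlt : ∀ x, x ≠ v → d (p x) < d x) (u : V) :
    ∃ (a : ℕ) (M : Multiset ℕ),
      Multiset.card M + 1 = ∑ x ∈ desc v p u, (if ch v p x = ∅ then 1 else 0) ∧
      a + M.sum = ∑ x ∈ desc v p u, 1 ∧
      nt v p u + 1 ≤ (a + 1) * mprod M ∧
      ∑ x ∈ desc v p u, nt v p x + nt v p u * (nt v p u + 1) ≤
        (a + 1) * mprod M * nt v p u + tri a + mtri M := by
  have key : ∀ n, ∀ u, (desc v p u).card < n → ∃ (a : ℕ) (M : Multiset ℕ),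
      Multiset.card M + 1 = ∑ x ∈ desc v p u, (if ch v p x = ∅ then 1 else 0) ∧
      a + M.sum = ∑ x ∈ desc v p u, 1 ∧
      nt v p u + 1 ≤ (a + 1) * mprod M ∧
      ∑ x ∈ desc v p u, nt v p x + nt v p u * (nt v p u + 1) ≤
        (a + 1) * mprod M * nt v p u + tri a + mtri M := by
    intro n
    induction n with
    | zero => intro u h; omega
    | succ n ih =>
      intro u hu
      have IH := fun c (hc : c ∈ ch v p u) => ih c (by
        have h1 := sum_desc hlt (fun _ => 1) u
        simp only [Finset.sum_const, smul_eq_mul, mul_one] at h1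
        have h2 := Finset.single_le_sum (f := fun c => (desc v p c).card)
          (fun _ _ => Nat.zero_le _) hc
        omega)
      rcases Finset.eq_empty_or_nonempty (ch v p u) with he | ⟨c1, hc1⟩
      · refine ⟨1, 0, ?_, ?_, ?_, ?_⟩
        · rw [sum_desc hlt, he]; simp
        · rw [sum_desc hlt, he]; simp
        · rw [nt_eq hlt, he]; simp
        · rw [sum_desc hlt, nt_eq hlt, he]; simp [tri]
      choose! A M hcard hsum hP hT using IH
      have hne : ch v p u ≠ ∅ := Finset.ne_empty_of_mem hc1
      obtain ⟨m1, m2, m3, m4⟩ := msum ((ch v p u).erase c1) (fun c => A c ::ₘ M c)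
      refine ⟨A c1 + 1, M c1 + ∑ c ∈ (ch v p u).erase c1, A c ::ₘ M c, ?_, ?_, ?_⟩
      · rw [sum_desc hlt, if_neg hne, Multiset.card_add, m1,
          ← Finset.add_sum_erase _ _ hc1, ← hcard c1 hc1]
        have : ∑ i ∈ (ch v p u).erase c1, Multiset.card (A i ::ₘ M i) =
            ∑ c ∈ (ch v p u).erase c1, ∑ x ∈ desc v p c, (if ch v p x = ∅ then 1 else 0) := by
          refine Finset.sum_congr rfl fun c hc => ?_
          rw [Multiset.card_cons, hcard c (Finset.mem_of_mem_erase hc)]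
        rw [this]
        ring
      · rw [sum_desc hlt, Multiset.sum_add, m2,
          ← Finset.add_sum_erase _ _ hc1, ← hsum c1 hc1]
        have : ∑ i ∈ (ch v p u).erase c1, (A i ::ₘ M i).sum =
            ∑ c ∈ (ch v p u).erase c1, ∑ x ∈ desc v p c, 1 := by
          refine Finset.sum_congr rfl fun c hc => ?_
          rw [Multiset.sum_cons, hsum c (Finset.mem_of_mem_erase hc)]
        rw [this]
        ring
      · rw [mprod_add, mtri_add, m3, m4, sum_desc hlt (nt v p), tri_succ]
        simp only [mprod_cons, mtri_cons]
        set x := nt v p u with hx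
        set Q := mprod (M c1) * ∏ c ∈ (ch v p u).erase c1, ((A c + 1) * mprod (M c)) with hQ
        have hQ1 : 1 ≤ Q := by
          apply Nat.mul_pos (mprod_pos _)
          exact Finset.prod_pos fun c _ => Nat.mul_pos (Nat.succ_pos _) (mprod_pos _)
        have hPi : ∏ c ∈ ch v p u, ((A c + 1) * mprod (M c)) = (A c1 + 1) * Q := by
          rw [← Finset.mul_prod_erase _ _ hc1, hQ]
          ring
        have hxprod : x = ∏ c ∈ ch v p u, (1 + nt v p c) := nt_eq hlt u
        have hy : ∀ c ∈ ch v p u, ∃ y, (A c + 1) * mprod (M c) = (1 + nt v p c) + y := by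
          intro c hc
          obtain ⟨y, hy⟩ := Nat.exists_eq_add_of_le (hP c hc)
          exact ⟨y, by omega⟩
        choose! y hy using hy
        have hfx : ∀ c ∈ ch v p u, 1 + nt v p c ≤ x := by
          intro c hc
          rw [hxprod]
          exact Finset.single_le_prod' (f := fun c => 1 + nt v p c) (fun _ _ => by omega) hc
        have h1 : x + ∑ c ∈ ch v p u, y c ≤ (A c1 + 1) * Q := by
          rw [← hPi, Finset.prod_congr rfl hy]
          refine le_trans ?_ (prod_ineq _ _ _)
          rw [← hxprod]
          gcongr with c hc
          refine Nat.le_mul_of_pos_right _ (Finset.prod_pos fun _ _ => by omega)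
        have h2 : ∑ c ∈ ch v p u, y c * nt v p c + ∑ c ∈ ch v p u, y c ≤
            (∑ c ∈ ch v p u, y c) * x := by
          rw [← Finset.sum_add_distrib, Finset.sum_mul]
          refine Finset.sum_le_sum fun c hc => ?_
          have := Nat.mul_le_mul_left (y c) (hfx c hc)
          linarith
        have h3 : ∑ c ∈ ch v p u, ∑ z ∈ desc v p c, nt v p z ≤ ∑ c ∈ ch v p u, y c * nt v p c +
            ∑ c ∈ ch v p u, (tri (A c) + mtri (M c)) := by
          rw [← Finset.sum_add_distrib]
          refine Finset.sum_le_sum fun c hc => ?_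
          have := hT c hc
          rw [hy c hc] at this
          nlinarith
        rw [← Finset.add_sum_erase _ (fun c => tri (A c) + mtri (M c)) hc1] at h3
        constructor
        · have : (A c1 + 1 + 1) * Q = (A c1 + 1) * Q + Q := by ring
          omega
        · have h4 : 3 * x ≤ (A c1 + 1) * Q + Q * x + A c1 + 1 := by
            rcases Nat.lt_or_ge 1 Q with h | h
            · have h6 : 2 * x ≤ Q * x := Nat.mul_le_mul_right x h
              have h7 : x ≤ (A c1 + 1) * Q := le_trans (Nat.le_add_right _ _) h1
              linarith [Nat.zero_le (A c1)]
            · have : Q = 1 := by omega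
              rw [this] at h1 ⊢
              omega
          have hx1 : 1 ≤ x := by have := hfx c1 hc1; omega
          obtain ⟨x', hx'⟩ : ∃ x', x = x' + 1 := ⟨x - 1, by omega⟩
          have h5 : (∑ c ∈ ch v p u, y c) * x' + x * x' ≤ (A c1 + 1) * Q * x' := by
            have := Nat.mul_le_mul_right x' h1
            linarith
          generalize (∑ c ∈ ch v p u, y c) = Y at *
          generalize (∑ c ∈ ch v p u, y c * nt v p c) = W at *
          generalize ∑ c ∈ ch v p u, ∑ z ∈ desc v p c, nt v p z = W1 at *
          rw [hx'] at h2 h4 h5 ⊢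
          nlinarith
  exact key _ u (Nat.lt_succ_self _)

lemma tree_bound {G : SimpleGraph V} (hR : Rooted G v p d) 
    (hmax : ∀ x, through G x ≤ through G v) (hne : ch v p v ≠ ∅) :
    ∃ M : Multiset ℕ, Multiset.card M = ∑ x, (if ch v p x = ∅ then 1 else 0) ∧
      M.sum + 1 = Fintype.card V ∧ coreIndex G ≤ mprod M + mtri M := by
  have hlt := hR.lt
  choose A M hcard hsum hP hT using fun c => branch hlt c
  obtain ⟨m1, m2, m3, m4⟩ := msum (ch v p v) (fun c => A c ::ₘ M c)
  refine ⟨∑ c ∈ ch v p v, A c ::ₘ M c, ?_, ?_, ?_⟩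
  · rw [m1, ← desc_root hlt, sum_desc hlt, if_neg hne, zero_add]
    refine Finset.sum_congr rfl fun c _ => ?_
    rw [Multiset.card_cons, hcard]
  · rw [m2, ← Finset.card_univ, Finset.card_eq_sum_ones, ← desc_root hlt, sum_desc hlt, add_comm]
    congr 1
    refine Finset.sum_congr rfl fun c _ => ?_
    rw [Multiset.sum_cons, hsum]
  · rw [m3, m4, coreIndex_eq hR, ← desc_root hlt, sum_desc hlt, nt_eq hlt v]
    simp only [mprod_cons, mtri_cons]
    have hy : ∀ c ∈ ch v p v, ∃ y, (A c + 1) * mprod (M c) = (1 + nt v p c) + y := by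
      intro c hc
      obtain ⟨y, hy⟩ := Nat.exists_eq_add_of_le (hP c)
      exact ⟨y, by omega⟩
    choose! y hy using hy
    have h1 := prod_ineq (ch v p v) (fun c => 1 + nt v p c) y
    rw [Finset.prod_congr rfl hy]
    refine le_trans ?_ (Nat.add_le_add_right h1 _)
    rw [add_assoc, ← Finset.sum_add_distrib]
    refine Nat.add_le_add_left (Finset.sum_le_sum fun c hc => ?_) _
    have h2 := hT c
    rw [hy c hc] at h2
    have h3 := Nat.mul_le_mul_left (y c) (center_ineq hR hmax c hc)
    nlinarith

lemma degree_eq {G : SimpleGraph V} [DecidableRel G.Adj] (hR : Rooted G v p d) (u : V) :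
    G.degree u = (ch v p u).card + (if u = v then 0 else 1) := by
  rw [← G.card_neighborFinset_eq_degree]
  split_ifs with h
  · have : G.neighborFinset u = ch v p u := by
      ext w
      rw [mem_neighborFinset, hR.adj, mem_ch]
      simp [h]
    rw [this, add_zero]
  · have : G.neighborFinset u = insert (p u) (ch v p u) := by
      ext w
      rw [mem_neighborFinset, hR.adj, Finset.mem_insert, mem_ch]
      simp [h, eq_comm]
    rw [this, Finset.card_insert_of_notMem]
    intro hm
    obtain ⟨h1, h2⟩ := mem_ch.1 hm
    have h3 := hR.lt u h
    have h4 := hR.lt _ h1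
    rw [h2] at h4
    omega

lemma graph_bound (G : SimpleGraph V) [DecidableRel G.Adj] (hG : G.IsTree)
    (hn : 3 ≤ Fintype.card V) :
    ∃ M : Multiset ℕ, Multiset.card M = (Finset.univ.filter fun v => G.degree v = 1).card ∧
      M.sum + 1 = Fintype.card V ∧ coreIndex G ≤ mprod M + mtri M := by
  have : Nonempty V := hG.connected.nonempty
  obtain ⟨v, hmax⟩ := Finite.exists_max (through G)
  obtain ⟨p, d, hR⟩ := exists_rooted G hG v
  have hlt := hR.lt
  have hcard : Fintype.card V = 1 + ∑ c ∈ ch v p v, ∑ x ∈ desc v p c, 1 := by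
    rw [← Finset.card_univ, Finset.card_eq_sum_ones, ← desc_root hlt, sum_desc hlt]
  have h0 : ch v p v ≠ ∅ := by
    intro h
    rw [h] at hcard
    simp at hcard
    omega
  have h1 : (ch v p v).card ≠ 1 := by
    intro h
    obtain ⟨c, hc⟩ := Finset.card_eq_one.1 h
    have h2 := center_ineq hR hmax c (by simp [hc])
    rw [hc] at h2 hcard
    simp only [Finset.erase_singleton, Finset.prod_empty, Finset.sum_singleton] at h2 hcard
    rw [sum_desc hlt] at hcard
    have h3 : ch v p c = ∅ := by
      by_contra hne
      obtain ⟨b, hb⟩ := Finset.nonempty_iff_ne_empty.2 hne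
      rw [nt_eq hlt] at h2
      have h4 := Finset.single_le_prod' (f := fun c => 1 + nt v p c)
        (fun _ _ => Nat.le_add_right _ _) hb
      have h5 : 1 ≤ nt v p b := by
        rw [nt_eq hlt]
        exact Finset.prod_pos fun _ _ => Nat.add_pos_left Nat.one_pos _
      omega
    rw [h3] at hcard
    simp at hcard
    omega
  obtain ⟨M, hM, hM2⟩ := tree_bound hR hmax h0
  refine ⟨M, ?_, hM2⟩
  rw [hM, Finset.card_filter]
  refine Finset.sum_congr rfl fun u _ => ?_
  rw [degree_eq hR]
  by_cases hu : u = v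
  · subst hu
    simp [h0, h1]
  · simp [hu]

end

section

/-- Sum of squares, used as a termination measure. -/
def msq (M : Multiset ℕ) : ℕ := (M.map fun a => a * a).sum

lemma all_close (M : Multiset ℕ) (m : ℕ) (h : ∀ x ∈ M, x = m ∨ x = m + 1) :
    ∃ s t, M = Multiset.replicate s (m + 1) + Multiset.replicate t m := by
  induction M using Multiset.induction_on with
  | empty => exact ⟨0, 0, by simp⟩
  | cons a M ih =>
    obtain ⟨s, t, hst⟩ := ih fun x hx => h x (Multiset.mem_cons_of_mem hx)
    rcases h a (Multiset.mem_cons_self _ _) with rfl | rfl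
    · exact ⟨s, t + 1, by rw [hst, Multiset.replicate_succ, Multiset.add_cons]⟩
    · exact ⟨s + 1, t, by rw [hst, Multiset.replicate_succ, Multiset.cons_add]⟩

lemma balance (k N : ℕ) (hk : 1 ≤ k) : ∀ M : Multiset ℕ, Multiset.card M = k → M.sum = N →
    mprod M + mtri M ≤
      mprod (Multiset.replicate (N - k * (N / k)) (N / k + 1) +
        Multiset.replicate (k - (N - k * (N / k))) (N / k)) +
      mtri (Multiset.replicate (N - k * (N / k)) (N / k + 1) +
        Multiset.replicate (k - (N - k * (N / k))) (N / k)) := by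
  have key : ∀ n, ∀ M : Multiset ℕ, msq M < n → Multiset.card M = k → M.sum = N →
    mprod M + mtri M ≤
      mprod (Multiset.replicate (N - k * (N / k)) (N / k + 1) +
        Multiset.replicate (k - (N - k * (N / k))) (N / k)) +
      mtri (Multiset.replicate (N - k * (N / k)) (N / k + 1) +
        Multiset.replicate (k - (N - k * (N / k))) (N / k)) := by
    intro n
    induction n with
    | zero => intro M h; omega
    | succ n ih =>
      intro M hM hc hs
      by_cases hex : ∃ x ∈ M, ∃ y ∈ M, y + 2 ≤ x
      · obtain ⟨x, hx, y, hy, hxy⟩ := hex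
        obtain ⟨M1, rfl⟩ := Multiset.exists_cons_of_mem hx
        have hy1 : y ∈ M1 := by
          rcases Multiset.mem_cons.1 hy with h | h
          · omega
          · exact h
        obtain ⟨M2, rfl⟩ := Multiset.exists_cons_of_mem hy1
        obtain ⟨e, rfl⟩ := Nat.exists_eq_add_of_le hxy
        simp only [Multiset.card_cons, Multiset.sum_cons] at hc hs
        refine le_trans ?_ (ih ((y + 1 + e) ::ₘ (y + 1) ::ₘ M2) ?_ ?_ ?_)
        · simp only [mprod_cons, mtri_cons]
          have h1 : tri (y + 2 + e) = tri (y + 1 + e) + (y + 1 + e + 1) := by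
            rw [← tri_succ]; congr 1; ring
          have h2 := tri_succ y
          have h3 := mprod_pos M2
          nlinarith
        · simp only [msq, Multiset.map_cons, Multiset.sum_cons] at hM ⊢
          nlinarith
        · simp only [Multiset.card_cons]; omega
        · simp only [Multiset.sum_cons]; omega
      · push Not at hex
        have hne : ∃ m ∈ M, ∀ x ∈ M, m ≤ x := by
          have h0 : M.toFinset.Nonempty := by
            rw [Multiset.toFinset_nonempty]
            rintro rfl
            simp at hc
            omega
          refine ⟨M.toFinset.min' h0, ?_, ?_⟩
          · exact Multiset.mem_toFinset.1 (Finset.min'_mem _ _)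
          · intro x hx
            exact Finset.min'_le _ _ (Multiset.mem_toFinset.2 hx)
        obtain ⟨m, hm, hmin⟩ := hne
        obtain ⟨s, t, hst⟩ := all_close M m fun x hx => by
          have := hmin x hx
          have := hex x hx m hm
          omega
        have ht : 1 ≤ t := by
          by_contra h
          have : t = 0 := by omega
          subst this
          rw [hst] at hm
          simp only [Multiset.replicate_zero, add_zero] at hm
          have := Multiset.eq_of_mem_replicate hm
          omega
        have hc' : s + t = k := by rw [← hc, hst]; simp
        have hs' : k * m + s = N := by
          rw [← hs, hst, ← hc']
          simp
          ring
        have hq : N / k = m := by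
          rw [← hs', Nat.mul_add_div (by omega), Nat.div_eq_of_lt (by omega), add_zero]
        have hr : N - k * m = s := by omega
        rw [hq, hr, hst]
        have : k - s = t := by omega
        rw [this]
  exact fun M => key _ M (Nat.lt_succ_self _)

lemma mprod_replicate (s a : ℕ) : mprod (Multiset.replicate s a) = (a + 1) ^ s := by
  simp [mprod]

lemma mtri_replicate (s a : ℕ) : mtri (Multiset.replicate s a) = s * tri a := by
  simp [mtri]

lemma two_tri (a : ℕ) : 2 * tri a = a * (a + 1) := by
  induction a with
  | zero => simp [tri]
  | succ a ih => rw [tri_succ, mul_add, ih]; ring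

/-- The parent map of the spider. -/
def sp (k q r : ℕ) : (Unit ⊕ ((Fin r × Fin (q + 1)) ⊕ (Fin (k - r) × Fin q))) →
    (Unit ⊕ ((Fin r × Fin (q + 1)) ⊕ (Fin (k - r) × Fin q)))
  | Sum.inl _ => Sum.inl ()
  | Sum.inr (Sum.inl (i, a)) => if (a : ℕ) = 0 then Sum.inl () else
      Sum.inr (Sum.inl (i, ⟨(a : ℕ) - 1, by omega⟩))
  | Sum.inr (Sum.inr (i, a)) => if (a : ℕ) = 0 then Sum.inl () else
      Sum.inr (Sum.inr (i, ⟨(a : ℕ) - 1, by omega⟩))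

/-- The depth function of the spider. -/
def sd (k q r : ℕ) : (Unit ⊕ ((Fin r × Fin (q + 1)) ⊕ (Fin (k - r) × Fin q))) → ℕ
  | Sum.inl _ => 0
  | Sum.inr (Sum.inl (_, a)) => a + 1
  | Sum.inr (Sum.inr (_, a)) => a + 1

/-- The number of subtrees of the spider with given top. -/
def sg (k q r : ℕ) : (Unit ⊕ ((Fin r × Fin (q + 1)) ⊕ (Fin (k - r) × Fin q))) → ℕ
  | Sum.inl _ => (q + 2) ^ r * (q + 1) ^ (k - r)
  | Sum.inr (Sum.inl (_, a)) => q + 1 - a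
  | Sum.inr (Sum.inr (_, a)) => q - a

lemma sp_ll (k q r : ℕ) (i j : Fin r) (a b : Fin (q + 1)) :
    sp k q r (Sum.inr (Sum.inl (i, a))) = Sum.inr (Sum.inl (j, b)) ↔
      i = j ∧ (a : ℕ) = (b : ℕ) + 1 := by
  simp only [sp]
  split_ifs with h
  · constructor
    · intro h; simp at h
    · intro h; omega
  · simp only [Sum.inr.injEq, Sum.inl.injEq, Prod.mk.injEq, Fin.ext_iff]
    omega

lemma sp_rr (k q r : ℕ) (i j : Fin (k - r)) (a b : Fin q) :
    sp k q r (Sum.inr (Sum.inr (i, a))) = Sum.inr (Sum.inr (j, b)) ↔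
      i = j ∧ (a : ℕ) = (b : ℕ) + 1 := by
  simp only [sp]
  split_ifs with h
  · constructor
    · intro h; simp at h
    · intro h; omega
  · simp only [Sum.inr.injEq, Prod.mk.injEq, Fin.ext_iff]
    omega

lemma sp_lr (k q r : ℕ) (i : Fin r) (j : Fin (k - r)) (a : Fin (q + 1)) (b : Fin q) :
    sp k q r (Sum.inr (Sum.inl (i, a))) ≠ Sum.inr (Sum.inr (j, b)) := by
  simp only [sp]
  split_ifs <;> simp

lemma sp_rl (k q r : ℕ) (i : Fin r) (j : Fin (k - r)) (a : Fin (q + 1)) (b : Fin q) :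
    sp k q r (Sum.inr (Sum.inr (j, b))) ≠ Sum.inr (Sum.inl (i, a)) := by
  simp only [sp]
  split_ifs <;> simp

lemma sp_l0 (k q r : ℕ) (i : Fin r) (a : Fin (q + 1)) (t : Unit) :
    sp k q r (Sum.inr (Sum.inl (i, a))) = Sum.inl t ↔ (a : ℕ) = 0 := by
  simp only [sp]
  split_ifs with h <;> simp [h]

lemma sp_r0 (k q r : ℕ) (i : Fin (k - r)) (a : Fin q) (t : Unit) :
    sp k q r (Sum.inr (Sum.inr (i, a))) = Sum.inl t ↔ (a : ℕ) = 0 := by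
  simp only [sp]
  split_ifs with h <;> simp [h]

lemma spider_rooted (k q r : ℕ) : Rooted (spider k q r) (Sum.inl ()) (sp k q r) (sd k q r) := by
  constructor
  · rintro (⟨⟩ | ⟨i, a⟩ | ⟨i, a⟩) (⟨⟩ | ⟨j, b⟩ | ⟨j, b⟩)
    · simp [spider]
    · rw [sp_l0]; simp [spider]
    · rw [sp_r0]; simp [spider]
    · rw [sp_l0]; simp [spider]
    · rw [sp_ll, sp_ll]
      simp only [spider, SimpleGraph.fromRel_adj, ne_eq, reduceCtorEq, not_false_eq_true,
        true_and, Sum.inr.injEq, Sum.inl.injEq, Prod.mk.injEq, false_and, and_false, exists_false,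
        false_or, or_false]
      constructor
      · rintro ⟨-, ⟨l, x, y, ⟨rfl, rfl⟩, ⟨rfl, rfl⟩, h⟩ | ⟨l, x, y, ⟨rfl, rfl⟩, ⟨rfl, rfl⟩, h⟩⟩
        · exact Or.inr ⟨rfl, h⟩
        · exact Or.inl ⟨rfl, h⟩
      · rintro (⟨rfl, h⟩ | ⟨rfl, h⟩)
        · refine ⟨fun h' => ?_, Or.inr ⟨_, _, _, ⟨rfl, rfl⟩, ⟨rfl, rfl⟩, h⟩⟩
          rw [h'.2] at h; omega
        · refine ⟨fun h' => ?_, Or.inl ⟨_, _, _, ⟨rfl, rfl⟩, ⟨rfl, rfl⟩, h⟩⟩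
          rw [h'.2] at h; omega
    · simp [spider, sp_lr, sp_rl]
    · rw [sp_r0]; simp [spider]
    · simp [spider, sp_lr, sp_rl]
    · rw [sp_rr, sp_rr]
      simp only [spider, SimpleGraph.fromRel_adj, ne_eq, reduceCtorEq, not_false_eq_true,
        true_and, Sum.inr.injEq, Prod.mk.injEq, false_and, and_false, exists_false,
        false_or, or_false]
      constructor
      · rintro ⟨-, ⟨l, x, y, ⟨rfl, rfl⟩, ⟨rfl, rfl⟩, h⟩ | ⟨l, x, y, ⟨rfl, rfl⟩, ⟨rfl, rfl⟩, h⟩⟩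
        · exact Or.inr ⟨rfl, h⟩
        · exact Or.inl ⟨rfl, h⟩
      · rintro (⟨rfl, h⟩ | ⟨rfl, h⟩)
        · refine ⟨fun h' => ?_, Or.inr ⟨_, _, _, ⟨rfl, rfl⟩, ⟨rfl, rfl⟩, h⟩⟩
          rw [h'.2] at h; omega
        · refine ⟨fun h' => ?_, Or.inl ⟨_, _, _, ⟨rfl, rfl⟩, ⟨rfl, rfl⟩, h⟩⟩
          rw [h'.2] at h; omega
  · rintro (⟨⟩ | ⟨i, a⟩ | ⟨i, a⟩) h
    · exact absurd rfl h
    · simp only [sp]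
      split_ifs with h0
      · simp [sd]
      · simp only [sd]; omega
    · simp only [sp]
      split_ifs with h0
      · simp [sd]
      · simp only [sd]; omega

lemma leg_prod (m : ℕ) : ∏ a : Fin m, (if (a : ℕ) = 0 then 1 + (m - a) else 1) = m + 1 := by
  cases m with
  | zero => simp
  | succ m => rw [Fin.prod_univ_succ]; simp; ring

lemma leg_sum (m : ℕ) : ∑ a : Fin m, (m - (a : ℕ)) = tri m := by
  induction m with
  | zero => simp [tri]
  | succ m ih =>
    rw [Fin.sum_univ_succ, tri_succ]
    simp [ih]
    ring

lemma sg_rec (k q r : ℕ) (y) :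
    sg k q r y = ∏ c ∈ ch (Sum.inl ()) (sp k q r) y, (1 + sg k q r c) := by
  classical
  rcases y with ⟨⟩ | ⟨i, b⟩ | ⟨i, b⟩
  · rw [ch, Finset.prod_filter, Fintype.prod_sum_type, Fintype.prod_sum_type,
      Fintype.prod_prod_type, Fintype.prod_prod_type]
    have h1 : ∀ (i : Fin r) (a : Fin (q + 1)), sp k q r (Sum.inr (Sum.inl (i, a))) = Sum.inl () ↔
        (a : ℕ) = 0 := by
      intro i a
      simp only [sp]
      split_ifs with h <;> simp [h]
    have h2 : ∀ (i : Fin (k - r)) (a : Fin q), sp k q r (Sum.inr (Sum.inr (i, a))) = Sum.inl () ↔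
        (a : ℕ) = 0 := by
      intro i a
      simp only [sp]
      split_ifs with h <;> simp [h]
    simp only [h1, h2, ne_eq, reduceCtorEq, not_false_eq_true, true_and, sg, leg_prod]
    simp
  · by_cases hb : (b : ℕ) + 1 < q + 1
    · have : ch (Sum.inl ()) (sp k q r) (Sum.inr (Sum.inl (i, b))) =
          {Sum.inr (Sum.inl (i, ⟨b + 1, hb⟩))} := by
        ext x
        rw [mem_ch, Finset.mem_singleton]
        rcases x with ⟨⟩ | ⟨j, a⟩ | ⟨j, a⟩
        · simp
        · rw [sp_ll]
          simp only [ne_eq, reduceCtorEq, not_false_eq_true, true_and, Sum.inr.injEq, Sum.inl.injEq, Prod.mk.injEq, Fin.ext_iff]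
        · simp [sp_rl]
      rw [this]
      simp [sg]
      omega
    · have : ch (Sum.inl ()) (sp k q r) (Sum.inr (Sum.inl (i, b))) = ∅ := by
        ext x
        rw [mem_ch]
        rcases x with ⟨⟩ | ⟨j, a⟩ | ⟨j, a⟩
        · simp
        · rw [sp_ll]
          simp only [ne_eq, reduceCtorEq, not_false_eq_true, true_and, Sum.inr.injEq, Sum.inl.injEq, Prod.mk.injEq, Fin.ext_iff, Finset.notMem_empty, iff_false]
          omega
        · simp [sp_rl]
      rw [this]
      simp [sg]
      omega
  · by_cases hb : (b : ℕ) + 1 < q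
    · have : ch (Sum.inl ()) (sp k q r) (Sum.inr (Sum.inr (i, b))) =
          {Sum.inr (Sum.inr (i, ⟨b + 1, hb⟩))} := by
        ext x
        rw [mem_ch, Finset.mem_singleton]
        rcases x with ⟨⟩ | ⟨j, a⟩ | ⟨j, a⟩
        · simp
        · simp [sp_lr]
        · rw [sp_rr]
          simp only [ne_eq, reduceCtorEq, not_false_eq_true, true_and, Sum.inr.injEq, Sum.inl.injEq, Prod.mk.injEq, Fin.ext_iff]
      rw [this]
      simp [sg]
      omega
    · have : ch (Sum.inl ()) (sp k q r) (Sum.inr (Sum.inr (i, b))) = ∅ := by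
        ext x
        rw [mem_ch]
        rcases x with ⟨⟩ | ⟨j, a⟩ | ⟨j, a⟩
        · simp
        · simp [sp_lr]
        · rw [sp_rr]
          simp only [ne_eq, reduceCtorEq, not_false_eq_true, true_and, Sum.inr.injEq, Sum.inl.injEq, Prod.mk.injEq, Fin.ext_iff, Finset.notMem_empty, iff_false]
          omega
      rw [this]
      simp [sg]
      omega

lemma spider_core (k q r : ℕ) : coreIndex (spider k q r) =
    (q + 2) ^ r * (q + 1) ^ (k - r) + (r * tri (q + 1) + (k - r) * tri q) := by
  classical
  have hR := spider_rooted k q r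
  rw [coreIndex_eq hR]
  simp only [nt_unique hR.lt _ (sg_rec k q r)]
  rw [Fintype.sum_sum_type, Fintype.sum_sum_type, Fintype.sum_prod_type, Fintype.sum_prod_type]
  simp only [sg, leg_sum]
  simp

end

end SpiderAux

open SpiderAux

/-- For `2 ≤ k ≤ n - 3`, with `q = ⌊(n-1)/k⌋` and `r = n - 1 - kq`, the spider tree
`T_{n,k}` (a vertex of degree `k` whose removal leaves `r` paths `P_{q+1}` and `k - r`
paths `P_q`) satisfies `F(T_{n,k}) = (q+2)^r (q+1)^{k-r} + (q+1)(qk + 2r)/2` and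
maximizes the core index over all trees on `n` vertices with exactly `k` leaves. -/
theorem spider_maximizes_coreIndex (n k q r : ℕ) (hk : 2 ≤ k) (hkn : k ≤ n - 3)
    (hq : q = (n - 1) / k) (hr : r = n - 1 - k * q) :
    coreIndex (spider k q r) =
      (q + 2) ^ r * (q + 1) ^ (k - r) + (q + 1) * (q * k + 2 * r) / 2 ∧
    (∀ {V : Type} [Fintype V] (G : SimpleGraph V) [DecidableRel G.Adj],
      Fintype.card V = n → G.IsTree →
      (Finset.univ.filter fun v => G.degree v = 1).card = k →
      coreIndex G ≤ coreIndex (spider k q r)) := by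
  have hrk : r < k := by
    have h1 := Nat.div_add_mod (n - 1) k
    have h2 := Nat.mod_lt (n - 1) (show k > 0 by omega)
    rw [← hq] at h1
    omega
  refine ⟨?_, ?_⟩
  · rw [spider_core]
    congr 1
    symm
    apply Nat.div_eq_of_eq_mul_right (by norm_num)
    obtain ⟨s, rfl⟩ := Nat.exists_eq_add_of_lt hrk
    have h1 := two_tri q
    have h2 := two_tri (q + 1)
    have h3 : r + s + 1 - r = s + 1 := by omega
    rw [h3]
    have : 2 * (r * tri (q + 1) + (s + 1) * tri q) =
      r * (2 * tri (q + 1)) + (s + 1) * (2 * tri q) := by ring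
    rw [this, h1, h2]
    ring
  · intro V _ G _ hV hG hk'
    obtain ⟨M, h1, h2, h3⟩ := graph_bound G hG (by omega)
    refine le_trans h3 (le_trans (balance k (n - 1) (by omega) M (h1.trans hk') (by omega)) ?_)
    rw [← hq, ← hr, spider_core, mprod_add, mtri_add, mprod_replicate, mprod_replicate,
      mtri_replicate, mtri_replicate]
end
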